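/- arXiv:1707.06028 — 2 statements merged into one kernel-verified Lean document; each statement's English description precedes it below -/
import Mathlib

section
/- Let n ≥ 1 be an integer, let F ⊆ ℝⁿ be a set of finite perimeter, and let r₀ > 0 and ε > 0 satisfy |F| ≤ |B| (ε/2)ⁿ. Then there exists r ∈ (r₀ − ε, r₀) such that H^{n−1}(∂*F ∩ B_r) ≥ H^{n−1}(F¹ ∩ ∂B_r), where ∂*F is the essential boundary of F, F¹ is the set of points of Lebesgue density 1 of F, B_r is the open ball of radius r centered at 0, and ∂B_r is the sphere of radius r centered at 0. -/
open MeasureTheory Metric Filter ENNReal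

noncomputable section

/-- The Lebesgue density of `E` at `x` equals `d`. -/
def HasDensity {n : ℕ} (E : Set (EuclideanSpace ℝ (Fin n)))
    (x : EuclideanSpace ℝ (Fin n)) (d : ℝ) : Prop :=
  Filter.Tendsto
    (fun r : ℝ => (volume (E ∩ Metric.ball x r)).toReal / (volume (Metric.ball x r)).toReal)
    (nhdsWithin 0 (Set.Ioi 0)) (nhds d)

/-- The essential boundary of `E`: points where `E` has neither density 0 nor density 1. -/
def essBoundary {n : ℕ} (E : Set (EuclideanSpace ℝ (Fin n))) :
    Set (EuclideanSpace ℝ (Fin n)) :=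
  {x | ¬ HasDensity E x 0 ∧ ¬ HasDensity E x 1}

/-- The perimeter of `E`: the `(n-1)`-dimensional Hausdorff measure of the essential
boundary of `E`. -/
def perimeter {n : ℕ} (E : Set (EuclideanSpace ℝ (Fin n))) : ℝ≥0∞ :=
  μH[(n : ℝ) - 1] (essBoundary E)

/-- The Riesz energy `V_α(E) = ∫_{E×E} |x-y|^(α-n) dx dy`. -/
def rieszEnergy {n : ℕ} (α : ℝ) (E : Set (EuclideanSpace ℝ (Fin n))) : ℝ≥0∞ :=
  ∫⁻ x in E, ∫⁻ y in E, ENNReal.ofReal (‖x - y‖ ^ (α - (n : ℝ)))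

/-- The potential energy `U_{β,A}(E) = A ∫_E |x|^β dx`. -/
def potEnergy {n : ℕ} (β A : ℝ) (E : Set (EuclideanSpace ℝ (Fin n))) : ℝ≥0∞ :=
  ∫⁻ x in E, ENNReal.ofReal (A * ‖x‖ ^ β)

/-- The total energy `E_{α,β,A} = P + V_α + U_{β,A}`. -/
def totalEnergy {n : ℕ} (α β A : ℝ) (E : Set (EuclideanSpace ℝ (Fin n))) : ℝ≥0∞ :=
  perimeter E + rieszEnergy α E + potEnergy β A E

/-- `E` is a minimizer of `E_{α,β,A}` at mass `m`. -/
def IsMinimizer {n : ℕ} (α β A m : ℝ) (E : Set (EuclideanSpace ℝ (Fin n))) : Prop :=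
  MeasurableSet E ∧ volume E = ENNReal.ofReal m ∧
    ∀ F : Set (EuclideanSpace ℝ (Fin n)), MeasurableSet F → volume F = ENNReal.ofReal m →
      totalEnergy α β A E ≤ totalEnergy α β A F

/-- The unit ball of `ℝⁿ` centered at the origin. -/
def unitBall (n : ℕ) : Set (EuclideanSpace ℝ (Fin n)) := Metric.ball 0 1

/-- The set of points of Lebesgue density `1` of `F`. -/
def densityOnePoints {n : ℕ} (F : Set (EuclideanSpace ℝ (Fin n))) :
    Set (EuclideanSpace ℝ (Fin n)) :=
  {x | HasDensity F x 1}

/-! ### Layer cake and one-dimensional Brunn-Minkowski -/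

lemma aux_vol_lt (c : ℝ≥0∞) : volume {t : ℝ | 0 < t ∧ ENNReal.ofReal t < c} = c := by
  by_cases hc : c = ⊤
  · subst hc
    have : {t : ℝ | 0 < t ∧ ENNReal.ofReal t < ⊤} = Set.Ioi 0 := by
      ext t; simp
    rw [this]; simp
  · have : {t : ℝ | 0 < t ∧ ENNReal.ofReal t < c} = Set.Ioo 0 c.toReal := by
      ext t
      simp only [Set.mem_ofPred_eq, Set.mem_Ioo]
      constructor
      · rintro ⟨h0, h⟩
        exact ⟨h0, (ENNReal.ofReal_lt_iff_lt_toReal h0.le hc).1 h⟩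
      · rintro ⟨h0, h⟩
        exact ⟨h0, (ENNReal.ofReal_lt_iff_lt_toReal h0.le hc).2 h⟩
    rw [this]; simp [hc]

lemma layercake {α : Type*} [MeasurableSpace α] (μ : Measure α) [SFinite μ] {f : α → ℝ≥0∞}
    (hf : Measurable f) :
    ∫⁻ x, f x ∂μ = ∫⁻ t in Set.Ioi (0 : ℝ), μ {x | ENNReal.ofReal t < f x} := by
  have hS : MeasurableSet {p : ℝ × α | ENNReal.ofReal p.1 < f p.2} :=
    measurableSet_lt (by fun_prop) (by fun_prop)
  have h1 : ∀ t : ℝ, μ {x | ENNReal.ofReal t < f x}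
      = ∫⁻ x, Set.indicator {p : ℝ × α | ENNReal.ofReal p.1 < f p.2} 1 (t, x) ∂μ := by
    intro t
    rw [← lintegral_indicator_one (measurableSet_lt (by fun_prop) hf)]
    rfl
  simp_rw [h1]
  rw [lintegral_lintegral_swap]
  · refine lintegral_congr fun x => ?_
    have : ∀ t : ℝ, Set.indicator {p : ℝ × α | ENNReal.ofReal p.1 < f p.2} (1 : ℝ × α → ℝ≥0∞) (t, x)
      = Set.indicator {t : ℝ | ENNReal.ofReal t < f x} 1 t := fun t => rfl
    simp_rw [this]
    rw [lintegral_indicator_one (measurableSet_lt (by fun_prop) (by fun_prop)),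
      Measure.restrict_apply (measurableSet_lt (by fun_prop) (by fun_prop))]
    conv_lhs => rw [← aux_vol_lt (f x)]
    congr 1; ext t; simp [and_comm]
  · exact (measurable_one.indicator hS).aemeasurable

lemma bm_one_compact {K L C : Set ℝ} (hK : IsCompact K) (hL : IsCompact L) (hKn : K.Nonempty)
    (hLn : L.Nonempty) (h : ∀ x ∈ K, ∀ y ∈ L, x + y ∈ C) :
    volume K + volume L ≤ volume C := by
  obtain ⟨a, ha, haK⟩ := hK.exists_isGreatest hKn
  obtain ⟨b, hb, hbL⟩ := hL.exists_isLeast hLn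
  set A := (fun x => x + b) '' K
  set B := (fun y => a + y) '' L
  have hA : volume A = volume K := by
    simp only [A]
    rw [Set.image_add_right, measure_preimage_add_right]
  have hB : volume B = volume L := by
    simp only [B]
    rw [Set.image_add_left, measure_preimage_add]
  have hBm : MeasurableSet B := (hL.image (by fun_prop)).measurableSet
  have hAB : A ∩ B ⊆ {a + b} := by
    rintro z ⟨⟨x, hx, rfl⟩, ⟨y, hy, hxy⟩⟩
    have := haK hx
    have := hbL hy
    have hxy2 : a + y = x + b := hxy
    show x + b = a + b
    linarith
  have h0 : volume (A ∩ B) = 0 := measure_mono_null hAB (by simp)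
  have := measure_union_add_inter (μ := volume) A hBm
  rw [h0, add_zero, hA, hB] at this
  rw [← this]
  apply measure_mono
  rintro z (⟨x, hx, rfl⟩ | ⟨y, hy, rfl⟩)
  · exact h x hx b hb
  · exact h a ha y hy

lemma bm_one {A B C : Set ℝ} (hA : MeasurableSet A) (hB : MeasurableSet B) (hAn : A.Nonempty)
    (hBn : B.Nonempty) (h : ∀ x ∈ A, ∀ y ∈ B, x + y ∈ C) :
    volume A + volume B ≤ volume C := by
  obtain ⟨a, ha⟩ := hAn
  obtain ⟨b, hb⟩ := hBn
  rw [hA.measure_eq_iSup_isCompact, hB.measure_eq_iSup_isCompact]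
  simp_rw [iSup_and']
  refine ENNReal.biSup_add_biSup_le' (p := fun K : Set ℝ => K ⊆ A ∧ IsCompact K)
    (q := fun K : Set ℝ => K ⊆ B ∧ IsCompact K)
    (f := fun K : Set ℝ => volume K) (g := fun K : Set ℝ => volume K)
    ⟨∅, by simp⟩ ⟨∅, by simp⟩ ?_
  rintro K ⟨hKA, hK⟩ L ⟨hLB, hL⟩
  refine le_trans (add_le_add (measure_mono (Set.subset_insert a K))
    (measure_mono (Set.subset_insert b L))) ?_
  refine bm_one_compact (hK.insert a) (hL.insert b) (by simp) (by simp) ?_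
  intro x hx y hy
  refine h x ?_ y ?_
  · rcases hx with rfl | hx
    exacts [ha, hKA hx]
  · rcases hy with rfl | hy
    exacts [hb, hLB hy]

lemma amgm (s l : ℝ) (hs : 0 < s) (hl : 0 < l) (hsl : s + l = 1) (a b : ℝ≥0∞) :
    a ^ s * b ^ l ≤ ENNReal.ofReal s * a + ENNReal.ofReal l * b := by
  by_cases ha : a = ⊤
  · subst ha; rw [ENNReal.mul_top (by simpa using hs)]; simp
  by_cases hb : b = ⊤
  · subst hb; rw [ENNReal.mul_top (by simpa using hl)]; simp
  lift a to NNReal using ha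
  lift b to NNReal using hb
  have := NNReal.geom_mean_le_arith_mean2_weighted s.toNNReal l.toNNReal a b
    (by rw [← Real.toNNReal_add hs.le hl.le, hsl, Real.toNNReal_one])
  rw [Real.coe_toNNReal _ hs.le, Real.coe_toNNReal _ hl.le] at this
  rw [← ENNReal.coe_rpow_of_nonneg _ hs.le, ← ENNReal.coe_rpow_of_nonneg _ hl.le]
  unfold ENNReal.ofReal
  exact_mod_cast this

open scoped Pointwise in
lemma pl_norm (s l : ℝ) (hs : 0 < s) (hl : 0 < l) (hsl : s + l = 1) {f g h : ℝ → ℝ≥0∞}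
    (hf : Measurable f) (hg : Measurable g) (hh : Measurable h)
    (hf1 : ∀ x, f x ≤ 1) (hg1 : ∀ x, g x ≤ 1)
    (hfs : ∀ t < (1 : ℝ≥0∞), ∃ x, t < f x) (hgs : ∀ t < (1 : ℝ≥0∞), ∃ x, t < g x)
    (H : ∀ x y, f x ^ s * g y ^ l ≤ h (s * x + l * y)) :
    ENNReal.ofReal s * (∫⁻ x, f x) + ENNReal.ofReal l * (∫⁻ x, g x) ≤ ∫⁻ x, h x := by
  rw [layercake volume hf, layercake volume hg, layercake volume hh]
  have key : ∀ t ∈ Set.Ioi (0 : ℝ), ENNReal.ofReal s * volume {x | ENNReal.ofReal t < f x} +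
      ENNReal.ofReal l * volume {x | ENNReal.ofReal t < g x}
      ≤ volume {x | ENNReal.ofReal t < h x} := by
    intro t ht
    have ht0 : 0 < t := ht
    by_cases ht1 : t < 1
    · have ht2 : ENNReal.ofReal t < 1 := by simpa using ht1
      have e1 : ∀ (r : ℝ) (hr : 0 < r) (A : Set ℝ), ENNReal.ofReal r * volume A = volume (r • A) := by
        intro r hr A
        rw [Measure.addHaar_smul]; simp [abs_of_pos hr]
      rw [e1 s hs, e1 l hl]
      refine bm_one ((measurableSet_lt (by fun_prop) hf).const_smul₀ _)
        ((measurableSet_lt (by fun_prop) hg).const_smul₀ _) ?_ ?_ ?_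
      · obtain ⟨x, hx⟩ := hfs _ ht2
        exact ⟨s • x, x, hx, rfl⟩
      · obtain ⟨x, hx⟩ := hgs _ ht2
        exact ⟨l • x, x, hx, rfl⟩
      · rintro _ ⟨x, hx, rfl⟩ _ ⟨y, hy, rfl⟩
        refine lt_of_lt_of_le ?_ (H x y)
        have hx' : ENNReal.ofReal t < f x := hx
        have hy' : ENNReal.ofReal t < g y := hy
        have : ENNReal.ofReal t = ENNReal.ofReal t ^ s * ENNReal.ofReal t ^ l := by
          rw [← ENNReal.rpow_add _ _ (by simpa using ht0) (by simp), hsl]; simp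
        rw [this]
        exact ENNReal.mul_lt_mul (ENNReal.rpow_lt_rpow hx' hs) (ENNReal.rpow_lt_rpow hy' hl)
    · have h1 : (1 : ℝ≥0∞) ≤ ENNReal.ofReal t := by simpa using ht1
      have e1 : {x | ENNReal.ofReal t < f x} = ∅ := by
        ext x; simpa using (hf1 x).trans h1
      have e2 : {x | ENNReal.ofReal t < g x} = ∅ := by
        ext x; simpa using (hg1 x).trans h1
      simp [e1, e2]
  have hmeas : ∀ {f : ℝ → ℝ≥0∞}, Measurable f →
      Measurable fun t : ℝ => volume {x | ENNReal.ofReal t < f x} := by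
    intro f hf
    apply Antitone.measurable
    intro a b hab
    refine measure_mono fun x hx => ?_
    exact lt_of_le_of_lt (ENNReal.ofReal_le_ofReal hab) hx
  rw [← lintegral_const_mul _ (hmeas hf), ← lintegral_const_mul _ (hmeas hg),
    ← lintegral_add_left ((hmeas hf).const_mul _)]
  exact setLIntegral_mono' measurableSet_Ioi key

lemma pl_bdd (s l : ℝ) (hs : 0 < s) (hl : 0 < l) (hsl : s + l = 1) {f g h : ℝ → ℝ≥0∞}
    (hf : Measurable f) (hg : Measurable g) (hh : Measurable h) (M : ℝ≥0∞) (hM : M ≠ ⊤)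
    (hf1 : ∀ x, f x ≤ M) (hg1 : ∀ x, g x ≤ M)
    (H : ∀ x y, f x ^ s * g y ^ l ≤ h (s * x + l * y)) :
    (∫⁻ x, f x) ^ s * (∫⁻ x, g x) ^ l ≤ ∫⁻ x, h x := by
  set a := ⨆ x, f x with ha
  set b := ⨆ x, g x with hb
  have haT : a ≠ ⊤ := ((iSup_le hf1).trans_lt hM.lt_top).ne
  have hbT : b ≠ ⊤ := ((iSup_le hg1).trans_lt hM.lt_top).ne
  by_cases ha0 : a = 0
  · have : ∀ x, f x = 0 := fun x => le_antisymm (ha0 ▸ le_iSup f x) bot_le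
    simp [this, hs]
  by_cases hb0 : b = 0
  · have : ∀ x, g x = 0 := fun x => le_antisymm (hb0 ▸ le_iSup g x) bot_le
    simp [this, hl]
  have hsup : ∀ (f : ℝ → ℝ≥0∞), (⨆ x, f x) ≠ 0 → (⨆ x, f x) ≠ ⊤ → ∀ t < (1 : ℝ≥0∞),
      ∃ x, t < (⨆ x, f x)⁻¹ * f x := by
    intro f h0 hT t ht
    have : t * (⨆ x, f x) < ⨆ x, f x := by
      conv_rhs => rw [← one_mul (⨆ x, f x)]
      exact (ENNReal.mul_lt_mul_iff_left h0 hT).2 ht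
    obtain ⟨x, hx⟩ := lt_iSup_iff.1 this
    refine ⟨x, ?_⟩
    rw [mul_comm, ← div_eq_mul_inv]
    exact (ENNReal.lt_div_iff_mul_lt (Or.inl h0) (Or.inl hT)).2 hx
  have hle : ∀ (f : ℝ → ℝ≥0∞) x, (⨆ x, f x)⁻¹ * f x ≤ 1 := by
    intro f x
    refine le_trans (mul_le_mul_right (le_iSup f x) _) ?_
    exact ENNReal.inv_mul_le_one _
  have := pl_norm s l hs hl hsl (f := fun x => a⁻¹ * f x) (g := fun x => b⁻¹ * g x)
    (h := fun x => (a⁻¹ ^ s * b⁻¹ ^ l) * h x) (hf.const_mul _) (hg.const_mul _) (hh.const_mul _)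
    (hle f) (hle g) (hsup f ha0 haT) (hsup g hb0 hbT) (by
      intro x y
      rw [ENNReal.mul_rpow_of_nonneg _ _ hs.le, ENNReal.mul_rpow_of_nonneg _ _ hl.le,
        mul_mul_mul_comm]
      gcongr
      exact H x y)
  have h2 := (amgm s l hs hl hsl _ _).trans this
  rw [lintegral_const_mul _ hf, lintegral_const_mul _ hg, lintegral_const_mul _ hh,
    ENNReal.mul_rpow_of_nonneg _ _ hs.le, ENNReal.mul_rpow_of_nonneg _ _ hl.le,
    mul_mul_mul_comm] at h2
  have c0 : a⁻¹ ^ s * b⁻¹ ^ l ≠ 0 := by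
    simp [hs.not_gt, hl.not_gt, haT, hbT]
  have cT : a⁻¹ ^ s * b⁻¹ ^ l ≠ ⊤ := by
    apply ENNReal.mul_ne_top <;> apply ENNReal.rpow_ne_top_of_nonneg <;>
      first | exact hs.le | exact hl.le | simpa
  exact (ENNReal.mul_le_mul_iff_right c0 cT).1 h2

lemma pl_one (s l : ℝ) (hs : 0 < s) (hl : 0 < l) (hsl : s + l = 1) {f g h : ℝ → ℝ≥0∞}
    (hf : Measurable f) (hg : Measurable g) (hh : Measurable h)
    (H : ∀ x y, f x ^ s * g y ^ l ≤ h (s * x + l * y)) :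
    (∫⁻ x, f x) ^ s * (∫⁻ x, g x) ^ l ≤ ∫⁻ x, h x := by
  have conv : ∀ {f : ℝ → ℝ≥0∞}, Measurable f →
      ∫⁻ x, f x = ⨆ n : ℕ, ∫⁻ x, min (f x) n := by
    intro f hf
    rw [← lintegral_iSup (fun n => hf.min measurable_const)]
    · refine lintegral_congr fun x => ?_
      change f x = ⨆ n : ℕ, f x ⊓ (n : ℝ≥0∞)
      rw [← inf_iSup_eq, ENNReal.iSup_natCast]; simp
    · intro a b hab x
      simp only
      gcongr
  rw [conv hf, conv hg]
  have r1 : ∀ (u : ℕ → ℝ≥0∞) (r : ℝ), 0 < r → (⨆ n, u n) ^ r = ⨆ n, u n ^ r := by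
    intro u r hr
    exact (ENNReal.orderIsoRpow r hr).map_iSup u
  rw [r1 _ _ hs, r1 _ _ hl]
  rw [ENNReal.iSup_mul]
  refine iSup_le fun i => ?_
  rw [ENNReal.mul_iSup]
  refine iSup_le fun j => ?_
  have hN : max i j = (max i j : ℕ) := rfl
  calc (∫⁻ x, min (f x) i) ^ s * (∫⁻ x, min (g x) j) ^ l
      ≤ (∫⁻ x, min (f x) (max i j : ℕ)) ^ s * (∫⁻ x, min (g x) (max i j : ℕ)) ^ l := by
        gcongr
        · exact le_max_left i j
        · exact le_max_right i j
    _ ≤ ∫⁻ x, h x := by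
        refine pl_bdd s l hs hl hsl (hf.min measurable_const) (hg.min measurable_const) hh
          ((max i j : ℕ) : ℝ≥0∞) (ENNReal.natCast_ne_top _) (fun x => min_le_right _ _)
          (fun x => min_le_right _ _) ?_
        intro x y
        refine le_trans ?_ (H x y)
        gcongr
        · exact min_le_left _ _
        · exact min_le_left _ _

/-- The Prékopa-Leindler inequality. -/
lemma pl_pi (s l : ℝ) (hs : 0 < s) (hl : 0 < l) (hsl : s + l = 1) (n : ℕ) :
    ∀ {f g h : (Fin n → ℝ) → ℝ≥0∞}, Measurable f → Measurable g → Measurable h →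
    (∀ x y, f x ^ s * g y ^ l ≤ h (s • x + l • y)) →
    (∫⁻ x, f x) ^ s * (∫⁻ x, g x) ^ l ≤ ∫⁻ x, h x := by
  induction n with
  | zero =>
    intro f g h hf hg hh H
    rw [Measure.volume_pi_eq_dirac 0]
    simp only [lintegral_dirac]
    convert! H 0 0 using 2
  | succ n ih =>
    intro f g h hf hg hh H
    have tr : ∀ {f : (Fin (n + 1) → ℝ) → ℝ≥0∞}, Measurable f →
        ∫⁻ x, f x = ∫⁻ t : ℝ, ∫⁻ y : Fin n → ℝ, f (Fin.cons t y) := by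
      intro f hf
      rw [← ((volume_preserving_piFinSuccAbove (fun _ : Fin (n + 1) => ℝ) 0).symm _).lintegral_comp hf]
      rw [Measure.volume_eq_prod, lintegral_prod (fun a : ℝ × (Fin n → ℝ) =>
        f ((MeasurableEquiv.piFinSuccAbove (fun _ : Fin (n + 1) => ℝ) 0).symm a))
        ((hf.comp (MeasurableEquiv.measurable _)).aemeasurable)]
      refine lintegral_congr fun t => lintegral_congr fun y => ?_
      simp [MeasurableEquiv.piFinSuccAbove, Fin.insertNthEquiv, Fin.insertNth_zero']
    have cm : ∀ {f : (Fin (n + 1) → ℝ) → ℝ≥0∞}, Measurable f →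
        Measurable (fun p : ℝ × (Fin n → ℝ) => f (Fin.cons p.1 p.2)) := by
      intro f hf
      refine hf.comp ?_
      refine measurable_pi_iff.2 fun i => ?_
      refine Fin.cases ?_ (fun i => ?_) i
      · simpa using measurable_fst
      · simp only [Fin.cons_succ]; fun_prop
    rw [tr hf, tr hg, tr hh]
    refine pl_one s l hs hl hsl (cm hf).lintegral_prod_right' (cm hg).lintegral_prod_right'
      (cm hh).lintegral_prod_right' ?_
    intro t t'
    refine ih ((cm hf).comp measurable_prodMk_left) ((cm hg).comp measurable_prodMk_left)
      ((cm hh).comp measurable_prodMk_left) ?_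
    intro x y
    refine (H (Fin.cons t x) (Fin.cons t' y)).trans (le_of_eq ?_)
    show h _ = h _
    congr 1
    ext i
    refine Fin.cases ?_ (fun i => ?_) i <;> simp

abbrev EE (n : ℕ) := EuclideanSpace ℝ (Fin n)

/-- Multiplicative Brunn-Minkowski. -/
lemma bm_mul (s l : ℝ) (hs : 0 < s) (hl : 0 < l) (hsl : s + l = 1) (n : ℕ) {A B C : Set (EE n)}
    (hA : MeasurableSet A) (hB : MeasurableSet B) (hC : MeasurableSet C)
    (H : ∀ x ∈ A, ∀ y ∈ B, s • x + l • y ∈ C) :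
    volume A ^ s * volume B ^ l ≤ volume C := by
  have tr : ∀ {A : Set (EE n)}, MeasurableSet A →
      volume A = ∫⁻ x : Fin n → ℝ, A.indicator 1 (WithLp.toLp 2 x) := by
    intro A hA
    rw [(PiLp.volume_preserving_toLp (Fin n)).lintegral_comp (measurable_one.indicator hA),
      lintegral_indicator_one hA]
  have hm : ∀ {A : Set (EE n)}, MeasurableSet A →
      Measurable fun x : Fin n → ℝ => A.indicator (1 : EE n → ℝ≥0∞) (WithLp.toLp 2 x) := by
    intro A hA
    exact (measurable_one.indicator hA).comp (PiLp.volume_preserving_toLp (Fin n)).measurable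
  rw [tr hA, tr hB, tr hC]
  refine pl_pi s l hs hl hsl n (hm hA) (hm hB) (hm hC) ?_
  intro x y
  by_cases hx : WithLp.toLp 2 x ∈ A
  · by_cases hy : WithLp.toLp 2 y ∈ B
    · have := H _ hx _ hy
      simp [hx, hy, this]
    · simp [hy, hl]
  · simp [hx, hs]

open scoped Pointwise in
lemma bm_ball (n : ℕ) (hn : 1 ≤ n) {A D : Set (EE n)} (hA : MeasurableSet A) (hD : MeasurableSet D)
    {v δ w : ℝ} (hv : 0 < v) (hAv : volume A = ENNReal.ofReal v) (hδ : 0 < δ)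
    (hw : 0 < w) (hwv : volume (ball (0 : EE n) 1) = ENNReal.ofReal w)
    (H : ∀ x ∈ A, ∀ y ∈ ball (0 : EE n) δ, x + y ∈ D) :
    ENNReal.ofReal ((v ^ (1 / n : ℝ) + δ * w ^ (1 / n : ℝ)) ^ n) ≤ volume D := by
  have hn0 : n ≠ 0 := by omega
  have hnR : (0 : ℝ) < n := by exact_mod_cast hn
  set a := v ^ (1 / n : ℝ) with ha
  set b := δ * w ^ (1 / n : ℝ) with hb
  have ha0 : 0 < a := Real.rpow_pos_of_pos hv _
  have hb0 : 0 < b := mul_pos hδ (Real.rpow_pos_of_pos hw _)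
  have han : a ^ n = v := by
    rw [ha, one_div, Real.rpow_inv_natCast_pow hv.le hn0]
  have hbn : b ^ n = δ ^ n * w := by
    rw [hb, mul_pow, one_div, Real.rpow_inv_natCast_pow hw.le hn0]
  set s := a / (a + b) with hs
  set l := b / (a + b) with hl
  have hs0 : 0 < s := by positivity
  have hl0 : 0 < l := by positivity
  have hsl : s + l = 1 := by rw [hs, hl]; field_simp
  have hball : volume (ball (0 : EE n) δ) = ENNReal.ofReal (b ^ n) := by
    rw [Measure.addHaar_ball_of_pos _ _ hδ, hwv, ← ENNReal.ofReal_mul (by positivity), hbn]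
    simp
  have e1 : volume (s⁻¹ • A) = ENNReal.ofReal ((a + b) ^ n) := by
    rw [Measure.addHaar_smul, hAv, ← ENNReal.ofReal_mul (by positivity), ← han]
    congr 1
    rw [finrank_euclideanSpace_fin, abs_of_pos (by positivity), ← mul_pow]
    congr 1; rw [hs]; field_simp
  have e2 : volume (l⁻¹ • ball (0 : EE n) δ) = ENNReal.ofReal ((a + b) ^ n) := by
    rw [Measure.addHaar_smul, hball, ← ENNReal.ofReal_mul (by positivity)]
    congr 1
    rw [finrank_euclideanSpace_fin, abs_of_pos (by positivity), ← mul_pow]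
    congr 1; rw [hl]; field_simp
  have := bm_mul s l hs0 hl0 hsl n (A := s⁻¹ • A) (B := l⁻¹ • ball (0 : EE n) δ) (C := D)
    (hA.const_smul₀ _) (measurableSet_ball.const_smul₀ _) hD (by
      rintro _ ⟨x, hx, rfl⟩ _ ⟨y, hy, rfl⟩
      simpa [smul_smul, hs0.ne', hl0.ne'] using H x hx y hy)
  rw [e1, e2, ← ENNReal.rpow_add _ _ (by simp; positivity) (by simp), hsl, ENNReal.rpow_one] at this
  exact this

lemma bm_lin (n : ℕ) (hn : 1 ≤ n) {A D : Set (EE n)} (hA : MeasurableSet A) (hD : MeasurableSet D)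
    {v δ w : ℝ} (hv : 0 < v) (hAv : ENNReal.ofReal v ≤ volume A) (hAf : volume A ≠ ⊤) (hδ : 0 < δ)
    (hw : 0 < w) (hwv : volume (ball (0 : EE n) 1) = ENNReal.ofReal w)
    (H : ∀ x ∈ A, ∀ y ∈ ball (0 : EE n) δ, x + y ∈ D) :
    volume A + ENNReal.ofReal (δ * (n * w ^ (1 / n : ℝ) * (v ^ (1 / n : ℝ)) ^ (n - 1)))
      ≤ volume D := by
  have hV : volume A = ENNReal.ofReal (volume A).toReal := (ENNReal.ofReal_toReal hAf).symm
  set V := (volume A).toReal with hVd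
  have hvV : v ≤ V := by
    rw [hV] at hAv
    exact (ENNReal.ofReal_le_ofReal_iff (by positivity)).1 hAv
  have hV0 : 0 < V := hv.trans_le hvV
  have h := bm_ball n hn hA hD hV0 hV hδ hw hwv H
  refine le_trans ?_ h
  rw [hV, ← ENNReal.ofReal_add hV0.le (by positivity)]
  apply ENNReal.ofReal_le_ofReal
  set a := V ^ (1 / n : ℝ) with ha
  set b := w ^ (1 / n : ℝ) with hb
  have ha0 : 0 < a := Real.rpow_pos_of_pos hV0 _
  have hb0 : 0 < b := Real.rpow_pos_of_pos hw _
  have han : a ^ n = V := by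
    rw [ha, one_div, Real.rpow_inv_natCast_pow hV0.le (by omega)]
  have hva : v ^ (1 / n : ℝ) ≤ a := Real.rpow_le_rpow hv.le hvV (by positivity)
  have hv0 : 0 < v ^ (1 / n : ℝ) := Real.rpow_pos_of_pos hv _
  have bern : a ^ n + n * a ^ (n - 1) * (δ * b) ≤ (a + δ * b) ^ n := by
    have h1 := one_add_mul_le_pow (a := δ * b / a) (le_trans (by norm_num) (by positivity : (0:ℝ) ≤ _)) n
    have h2 : (a + δ * b) ^ n = a ^ n * (1 + δ * b / a) ^ n := by
      rw [← mul_pow]; congr 1; field_simp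
    rw [h2]
    refine le_trans (le_of_eq ?_) (mul_le_mul_of_nonneg_left h1 (by positivity))
    obtain ⟨k, rfl⟩ : ∃ k, n = k + 1 := ⟨n - 1, by omega⟩
    simp only [Nat.add_sub_cancel, pow_succ]
    field_simp
  refine le_trans ?_ bern
  rw [han]
  have : (v ^ (1 / n : ℝ)) ^ (n - 1) ≤ a ^ (n - 1) := pow_le_pow_left₀ hv0.le hva _
  have h3 : δ * (n * b * (v ^ (1 / n : ℝ)) ^ (n - 1)) ≤ δ * (n * b * a ^ (n - 1)) := by gcongr
  linarith

/-! ### Cylindrical coordinates -/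

structure Cyl (k : ℕ) (e : EE (k + 1)) where
  J : ℝ × EE k ≃ᵐ EE (k + 1)
  mp : MeasurePreserving J volume volume
  P : EE k →ₗᵢ[ℝ] EE (k + 1)
  hJ : ∀ t y, J (t, y) = t • e + P y
  he : ‖e‖ = 1
  orth : ∀ y, inner ℝ e (P y) = 0

def consLp (k : ℕ) : EE k →ₗᵢ[ℝ] EE (k + 1) where
  toFun y := WithLp.toLp 2 (Fin.cons 0 (WithLp.ofLp y))
  map_add' x y := by
    ext i; refine Fin.cases ?_ (fun i => ?_) i <;> simp
  map_smul' c y := by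
    ext i; refine Fin.cases ?_ (fun i => ?_) i <;> simp
  norm_map' y := by
    simp [EuclideanSpace.norm_eq, Fin.sum_univ_succ]

lemma exists_cyl (k : ℕ) (e : EE (k + 1)) (he : ‖e‖ = 1) : Nonempty (Cyl k e) := by
  have hcard : Module.finrank ℝ (EE (k + 1)) = Fintype.card (Fin (k + 1)) := by simp
  obtain ⟨b, hb⟩ := Orthonormal.exists_orthonormalBasis_extension_of_card_eq
    (𝕜 := ℝ) (E := EE (k + 1)) hcard (v := fun _ => e) (s := {0}) (by
      rw [orthonormal_iff_ite]
      rintro ⟨i, hi⟩ ⟨j, hj⟩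
      have hi' : i = 0 := hi
      have hj' : j = 0 := hj
      subst hi' hj'
      simp [he])
  have hb0 : b 0 = e := hb 0 rfl
  let J : ℝ × EE k ≃ᵐ EE (k + 1) :=
    (((MeasurableEquiv.refl ℝ).prodCongr (MeasurableEquiv.toLp 2 (Fin k → ℝ)).symm).trans
      ((MeasurableEquiv.piFinSuccAbove (fun _ : Fin (k + 1) => ℝ) 0).symm.trans
        (MeasurableEquiv.toLp 2 (Fin (k + 1) → ℝ)))).trans b.repr.symm.toMeasurableEquiv
  have hJ1 : ∀ t y, J (t, y) = b.repr.symm (WithLp.toLp 2 (Fin.cons t (WithLp.ofLp y))) := by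
    intro t y
    simp [J, MeasurableEquiv.piFinSuccAbove, Fin.insertNthEquiv, Fin.insertNth_zero']
    exact ⟨rfl, rfl⟩
  refine ⟨⟨J, ?_, b.repr.symm.toLinearIsometry.comp (consLp k), ?_, he, ?_⟩⟩
  · refine MeasurePreserving.trans (MeasurePreserving.trans ?_ (MeasurePreserving.trans
      ((volume_preserving_piFinSuccAbove (fun _ : Fin (k + 1) => ℝ) 0).symm _)
      (PiLp.volume_preserving_toLp (Fin (k + 1))))) (b.repr.symm.measurePreserving)
    exact (MeasurePreserving.id _).prod (PiLp.volume_preserving_ofLp (Fin k))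
  · intro t y
    rw [hJ1]
    have : (WithLp.toLp 2 (Fin.cons t (WithLp.ofLp y)) : EE (k + 1))
        = t • EuclideanSpace.single 0 1 + consLp k y := by
      ext i; refine Fin.cases ?_ (fun i => ?_) i <;> simp [consLp]
    rw [this, map_add, map_smul, b.repr_symm_single, hb0]
    rfl
  · intro y
    rw [← hb0]
    have : inner ℝ (b 0) (b.repr.symm (consLp k y)) = consLp k y 0 := by
      rw [← b.repr_apply_apply]; simp
    exact this.trans (by simp [consLp])

namespace Cyl
variable {k : ℕ} {e : EE (k + 1)} (C : Cyl k e)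

lemma norm_sq (t : ℝ) (y : EE k) : ‖C.J (t, y)‖ ^ 2 = t ^ 2 + ‖y‖ ^ 2 := by
  rw [C.hJ, norm_add_sq_real, inner_smul_left, C.orth, norm_smul, C.he, C.P.norm_map]
  simp

lemma J_sub (t t' : ℝ) (y y' : EE k) : C.J (t, y) - C.J (t', y') = C.J (t - t', y - y') := by
  simp only [C.hJ, map_sub, sub_smul]; abel

lemma dist_sq (t t' : ℝ) (y y' : EE k) :
    dist (C.J (t, y)) (C.J (t', y')) ^ 2 = (t - t') ^ 2 + dist y y' ^ 2 := by
  rw [dist_eq_norm, J_sub, norm_sq, dist_eq_norm]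

lemma cont : Continuous C.J := by
  have : (C.J : ℝ × EE k → EE (k + 1)) = fun p => p.1 • e + C.P p.2 := by
    ext1 p; exact C.hJ p.1 p.2
  rw [this]
  have := C.P.continuous
  fun_prop

def pr (x : EE (k + 1)) : EE k := (C.J.symm x).2
def ht (x : EE (k + 1)) : ℝ := (C.J.symm x).1

lemma J_ht_pr (x) : C.J (C.ht x, C.pr x) = x := C.J.apply_symm_apply x
@[simp] lemma pr_J (t y) : C.pr (C.J (t, y)) = y := by simp [pr]
@[simp] lemma ht_J (t y) : C.ht (C.J (t, y)) = t := by simp [ht]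

lemma J_add (x : EE (k + 1)) (s : ℝ) : x + s • e = C.J (C.ht x + s, C.pr x) := by
  conv_lhs => rw [← C.J_ht_pr x]
  simp only [C.hJ, add_smul]; abel

lemma lip_pr : LipschitzWith 1 C.pr := by
  refine LipschitzWith.of_dist_le_mul fun x y => ?_
  rw [NNReal.coe_one, one_mul]
  have := C.dist_sq (C.ht x) (C.ht y) (C.pr x) (C.pr y)
  rw [J_ht_pr, J_ht_pr] at this
  refine abs_le_of_sq_le_sq' ?_ dist_nonneg |>.2
  nlinarith [sq_nonneg (C.ht x - C.ht y)]

lemma meas_ht : Measurable C.ht := by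
  unfold ht; exact measurable_fst.comp C.J.symm.measurable
lemma meas_pr : Measurable C.pr := by
  unfold pr; exact measurable_snd.comp C.J.symm.measurable

lemma ae_slice {p : EE (k + 1) → Prop} (h : ∀ᵐ x, p x) :
    ∀ᵐ y : EE k, ∀ᵐ t : ℝ, p (C.J (t, y)) := by
  have h1 : ∀ᵐ q : ℝ × EE k, p (C.J q) := C.mp.quasiMeasurePreserving.ae h
  have h2 : ∀ᵐ q : EE k × ℝ, p (C.J q.swap) := by
    have := (Measure.measurePreserving_swap (μ := (volume : Measure (EE k)))
      (ν := (volume : Measure ℝ))).quasiMeasurePreserving.ae h1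
    exact this
  exact Measure.ae_ae_of_ae_prod h2

lemma vol_eq {S : Set (EE (k + 1))} (hS : MeasurableSet S) :
    volume S = ∫⁻ y : EE k, volume {t : ℝ | C.J (t, y) ∈ S} := by
  rw [← C.mp.measure_preimage hS.nullMeasurableSet, Measure.volume_eq_prod,
    Measure.prod_apply_symm (C.J.measurable hS)]
  rfl

end Cyl

/-! ### Density points -/

lemma vball_eq {n : ℕ} (x : EE n) {r : ℝ} (hr : 0 < r) :
    volume (ball x r) = ENNReal.ofReal (r ^ n) * volume (ball (0 : EE n) 1) := by
  have := Measure.addHaar_ball_of_pos (volume : Measure (EE n)) x hr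
  simpa using this

lemma vball_pos {n : ℕ} (x : EE n) {r : ℝ} (hr : 0 < r) : 0 < (volume (ball x r)).toReal :=
  ENNReal.toReal_pos (measure_ball_pos _ _ hr).ne' measure_ball_lt_top.ne

lemma dens_compl {n : ℕ} {F : Set (EE n)} (hF : MeasurableSet F) (x : EE n) (d : ℝ)
    (h : HasDensity F x d) : HasDensity Fᶜ x (1 - d) := by
  unfold HasDensity at *
  refine ((tendsto_const_nhds (x := (1 : ℝ))).sub h).congr' ?_
  filter_upwards [self_mem_nhdsWithin] with r hr
  have hp := vball_pos x hr
  have h1 : volume (ball x r) = volume (F ∩ ball x r) + volume (Fᶜ ∩ ball x r) := by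
    rw [Set.inter_comm F, Set.inter_comm Fᶜ, ← Set.sdiff_eq, measure_inter_add_sdiff _ hF]
  have h2 : (volume (ball x r)).toReal
      = (volume (F ∩ ball x r)).toReal + (volume (Fᶜ ∩ ball x r)).toReal := by
    rw [h1, ENNReal.toReal_add]
    · exact ((measure_mono Set.inter_subset_right).trans_lt measure_ball_lt_top).ne
    · exact ((measure_mono Set.inter_subset_right).trans_lt measure_ball_lt_top).ne
  field_simp
  linarith

lemma dens_compl_iff1 {n : ℕ} {F : Set (EE n)} (hF : MeasurableSet F) (x : EE n) :
    HasDensity Fᶜ x 1 ↔ HasDensity F x 0 := by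
  constructor
  · intro h; simpa using dens_compl hF.compl x 1 h
  · intro h; simpa using dens_compl hF x 0 h

lemma dens_compl_iff0 {n : ℕ} {F : Set (EE n)} (hF : MeasurableSet F) (x : EE n) :
    HasDensity Fᶜ x 0 ↔ HasDensity F x 1 := by
  constructor
  · intro h; simpa using dens_compl hF.compl x 0 h
  · intro h; simpa using dens_compl hF x 1 h

lemma dens_unique {n : ℕ} {F : Set (EE n)} {x : EE n} (h0 : HasDensity F x 0)
    (h1 : HasDensity F x 1) : False := by
  have := tendsto_nhds_unique h0 h1
  norm_num at this

lemma ae_dens {k : ℕ} {F : Set (EE (k + 1))} (hF : MeasurableSet F) :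
    ∀ᵐ x, (x ∈ F → HasDensity F x 1) ∧ (x ∉ F → HasDensity F x 0) := by
  have key : ∀ G : Set (EE (k + 1)), MeasurableSet G →
      ∀ᵐ x, x ∈ G → HasDensity G x 1 := by
    intro G hG
    have := Besicovitch.ae_tendsto_measure_inter_div (volume : Measure (EE (k + 1))) G
    rw [ae_restrict_iff' hG] at this
    filter_upwards [this] with x hx hxG
    have h2 := (ENNReal.tendsto_toReal one_ne_top).comp (hx hxG)
    unfold HasDensity
    refine Tendsto.congr' ?_ (by simpa using h2)
    filter_upwards [self_mem_nhdsWithin] with r hr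
    have e1 : volume (G ∩ closedBall x r) = volume (G ∩ ball x r) := by
      apply measure_congr
      have : (closedBall x r : Set (EE (k + 1))) =ᵐ[volume] ball x r := by
        rw [← ball_union_sphere]
        exact union_ae_eq_left_of_ae_eq_empty
          (ae_eq_empty.2 (Measure.addHaar_sphere volume x r))
      exact (ae_eq_refl _).inter this
    simp only [Function.comp, e1, Measure.addHaar_closedBall_eq_addHaar_ball, ENNReal.toReal_div]
  filter_upwards [key F hF, key Fᶜ hF.compl] with x h1 h2
  exact ⟨h1, fun h => (dens_compl_iff1 hF x).1 (h2 h)⟩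

lemma dens_zero_bound {n : ℕ} {F : Set (EE n)} {x : EE n} (h : HasDensity F x 0) {c : ℝ}
    (hc : 0 < c) : ∃ R > 0, ∀ r ∈ Set.Ioo (0 : ℝ) R,
      volume (F ∩ ball x r) ≤ ENNReal.ofReal (c * r ^ n) := by
  have hw := vball_pos (0 : EE n) one_pos
  set w := (volume (ball (0 : EE n) 1)).toReal with hwdef
  have h2 : ∀ᶠ r in nhdsWithin (0 : ℝ) (Set.Ioi 0),
      (volume (F ∩ ball x r)).toReal / (volume (ball x r)).toReal < c / w :=
    h.eventually_lt_const (by positivity)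
  rw [eventually_nhdsWithin_iff, Metric.eventually_nhds_iff] at h2
  obtain ⟨R, hR, h3⟩ := h2
  refine ⟨R, hR, fun r hr => ?_⟩
  have h4 := h3 (y := r) (by rw [Real.dist_eq, sub_zero, abs_of_pos hr.1]; exact hr.2) hr.1
  rw [vball_eq x hr.1, ENNReal.toReal_mul, ENNReal.toReal_ofReal (pow_pos hr.1 n).le,
    ← hwdef, div_lt_div_iff₀ (mul_pos (pow_pos hr.1 n) hw) hw] at h4
  rw [← ENNReal.ofReal_toReal
    (show volume (F ∩ ball x r) ≠ ⊤ from
      ((measure_mono Set.inter_subset_right).trans_lt measure_ball_lt_top).ne)]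
  apply ENNReal.ofReal_le_ofReal
  have : (volume (F ∩ ball x r)).toReal * w ≤ (c * r ^ n) * w := by linarith
  exact le_of_mul_le_mul_right this hw

/-- points which see little of the complement of `F` at scales below `R` -/
def GG {n : ℕ} (F : Set (EE n)) (c R : ℝ) : Set (EE n) :=
  {x | ∀ r ∈ Set.Ioo 0 R, volume (Fᶜ ∩ ball x r) ≤ ENNReal.ofReal (c * r ^ n)}

lemma GG_closed {n : ℕ} (F : Set (EE n)) (c R : ℝ) : IsClosed (GG F c R) := by
  apply isClosed_of_closure_subset
  intro x hx r hr
  have h1 : ∀ d ∈ Set.Ioo (0 : ℝ) (R - r),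
      volume (Fᶜ ∩ ball x r) ≤ ENNReal.ofReal (c * (r + d) ^ n) := by
    intro d hd
    obtain ⟨x', hx', hd'⟩ := Metric.mem_closure_iff.1 hx d hd.1
    refine le_trans (measure_mono ?_) (hx' (r + d) ⟨by linarith [hr.1, hd.1], by linarith [hd.2]⟩)
    apply Set.inter_subset_inter_right
    apply ball_subset_ball'
    linarith
  have h2 : Tendsto (fun d : ℝ => ENNReal.ofReal (c * (r + d) ^ n)) (nhdsWithin 0 (Set.Ioi 0))
      (nhds (ENNReal.ofReal (c * (r + 0) ^ n))) := by
    have : Continuous (fun d : ℝ => ENNReal.ofReal (c * (r + d) ^ n)) :=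
      ENNReal.continuous_ofReal.comp (by fun_prop)
    exact (this.tendsto 0).mono_left nhdsWithin_le_nhds
  rw [add_zero] at h2
  refine ge_of_tendsto h2 ?_
  filter_upwards [Ioo_mem_nhdsGT (sub_pos.2 hr.2)] with d hd using h1 d hd

lemma GG_of_dens {n : ℕ} {F : Set (EE n)} (hF : MeasurableSet F) {x : EE n}
    (h : HasDensity F x 1) {c : ℝ} (hc : 0 < c) : ∃ R > 0, x ∈ GG F c R :=
  dens_zero_bound ((dens_compl_iff0 hF x).2 h) hc

lemma GG_mono {n : ℕ} {F : Set (EE n)} {c R R' : ℝ} (h : R' ≤ R) : GG F c R ⊆ GG F c R' :=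
  fun _ hx r hr => hx r ⟨hr.1, hr.2.trans_le h⟩

lemma GG_not_dens {n : ℕ} {F : Set (EE n)} (hF : MeasurableSet F) {c R : ℝ} (hc : 0 < c)
    (hR : 0 < R)
    (hcw : c * 3 ≤ (volume (ball (0 : EE n) 1)).toReal) {x : EE n} (hx : x ∈ GG F c R)
    (h0 : HasDensity F x 0) : False := by
  obtain ⟨R', hR', h⟩ := dens_zero_bound h0 hc
  set r := min R R' / 2
  have hm : 0 < min R R' := lt_min hR hR'
  have hr : 0 < r := by positivity
  have a1 := h r ⟨hr, by have := min_le_right R R'; simp only [r]; linarith⟩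
  have a2 := hx r ⟨hr, by have := min_le_left R R'; simp only [r]; linarith⟩
  have h1 : volume (ball x r) = volume (F ∩ ball x r) + volume (Fᶜ ∩ ball x r) := by
    rw [Set.inter_comm F, Set.inter_comm Fᶜ, ← Set.sdiff_eq, measure_inter_add_sdiff _ hF]
  have h2 := add_le_add a1 a2
  have hrn : 0 < r ^ n := pow_pos hr n
  rw [← h1, ← ENNReal.ofReal_add (by positivity) (by positivity), vball_eq x hr,
    ← ENNReal.ofReal_toReal (measure_ball_lt_top (μ := volume) (x := (0 : EE n)) (r := 1)).ne,
    ← ENNReal.ofReal_mul hrn.le, ENNReal.ofReal_le_ofReal_iff (by positivity)] at h2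
  nlinarith [mul_le_mul_of_nonneg_left hcw hrn.le, mul_pos hc hrn]

/-! ### the one dimensional Baire argument -/

lemma line_D {S1 S0 I : Set ℝ} (hI : I.OrdConnected) (cover : I ⊆ S1 ∪ S0) {q s : ℝ} (hq : q ∈ I)
    (hs : s ∈ I) (hq1 : q ∈ S1) (hs0 : s ∈ S0) :
    ∃ d ∈ Set.uIcc q s, d ∈ closure (S1 ∩ I) ∧ d ∈ closure (S0 ∩ I) := by
  have hc : IsPreconnected (Set.uIcc q s) := isPreconnected_uIcc
  rw [isPreconnected_closed_iff] at hc
  obtain ⟨d, hd, h⟩ := hc (closure (S1 ∩ I)) (closure (S0 ∩ I)) isClosed_closure isClosed_closure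
    (by
      intro x hx
      have hxI : x ∈ I := hI.uIcc_subset hq hs hx
      rcases cover hxI with h | h
      · exact Or.inl (subset_closure ⟨h, hxI⟩)
      · exact Or.inr (subset_closure ⟨h, hxI⟩))
    ⟨q, Set.left_mem_uIcc, subset_closure ⟨hq1, hq⟩⟩
    ⟨s, Set.right_mem_uIcc, subset_closure ⟨hs0, hs⟩⟩
  exact ⟨d, hd, h⟩

lemma line_half {S1 S0 I : Set ℝ} (hI : I.OrdConnected) (hIc : IsClosed I) (cover : I ⊆ S1 ∪ S0)
    (h1 : ∀ t ∈ S1, ∀ δ > 0, ¬ Set.Ioo t (t + δ) ⊆ S0)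
    (h2 : ∀ t ∈ S1, ∀ δ > 0, ¬ Set.Ioo (t - δ) t ⊆ S0)
    {t0 δ : ℝ} (hδ : 0 < δ) (ht0 : t0 ∈ closure (S1 ∩ I) ∩ closure (S0 ∩ I))
    (hdisj : Disjoint S1 S0)
    (hU : ∀ t ∈ closure (S1 ∩ I) ∩ closure (S0 ∩ I), |t - t0| < δ → t ∈ S1) : False := by
  set D := closure (S1 ∩ I) ∩ closure (S0 ∩ I) with hD
  have hDc : IsClosed D := isClosed_closure.inter isClosed_closure
  have hDI : D ⊆ I := fun x hx => closure_minimal Set.inter_subset_right hIc hx.1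
  obtain ⟨s, ⟨hs0, hsI⟩, hsd⟩ := Metric.mem_closure_iff.1 ht0.2 δ hδ
  rw [Real.dist_eq] at hsd
  have ht1 : t0 ∈ S1 := hU t0 ht0 (by simpa using hδ)
  have hne : t0 ≠ s := fun h => Set.disjoint_left.1 hdisj ht1 (h ▸ hs0)
  rw [abs_lt] at hsd
  rcases lt_or_gt_of_ne hne with hlt | hlt
  · have hcomp : IsCompact (D ∩ Set.Icc t0 s) := isCompact_Icc.inter_left hDc
    obtain ⟨p, ⟨hpD, hpI⟩, hpmax⟩ := hcomp.exists_isGreatest ⟨t0, ht0, le_refl _, hlt.le⟩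
    have hp1 : p ∈ S1 := hU p hpD (by rw [abs_lt]; constructor <;> linarith [hpI.1, hpI.2])
    have hps : p < s := lt_of_le_of_ne hpI.2 (fun h => Set.disjoint_left.1 hdisj hp1 (h ▸ hs0))
    refine h1 p hp1 (s - p) (by linarith) ?_
    intro q hq
    have hqI : q ∈ I := hI.out (hDI hpD) hsI ⟨hq.1.le, by linarith [hq.2]⟩
    rcases cover hqI with h | h
    · exfalso
      obtain ⟨d, hd, hdD⟩ := line_D hI cover hqI hsI h hs0
      rw [Set.uIcc_of_le (by linarith [hq.2])] at hd
      have := hpmax ⟨hdD, by linarith [hpI.1, hq.1, hd.1], hd.2⟩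
      linarith [hq.1, hd.1]
    · exact h
  · have hcomp : IsCompact (D ∩ Set.Icc s t0) := isCompact_Icc.inter_left hDc
    obtain ⟨p, ⟨hpD, hpI⟩, hpmin⟩ := hcomp.exists_isLeast ⟨t0, ht0, hlt.le, le_refl _⟩
    have hp1 : p ∈ S1 := hU p hpD (by rw [abs_lt]; constructor <;> linarith [hpI.1, hpI.2])
    have hps : s < p := lt_of_le_of_ne hpI.1 (fun h => Set.disjoint_left.1 hdisj hp1 (h ▸ hs0))
    refine h2 p hp1 (p - s) (by linarith) ?_
    intro q hq
    have hqI : q ∈ I := hI.out hsI (hDI hpD) ⟨by linarith [hq.1], hq.2.le⟩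
    rcases cover hqI with h | h
    · exfalso
      obtain ⟨d, hd, hdD⟩ := line_D hI cover hqI hsI h hs0
      rw [Set.uIcc_of_ge (by linarith [hq.1])] at hd
      have := hpmin ⟨hdD, hd.1, by linarith [hpI.2, hq.2, hd.2]⟩
      linarith [hq.2, hd.2]
    · exact h

lemma line_baire {S1 S0 I : Set ℝ} (hI : I.OrdConnected) (hIc : IsClosed I) (cover : I ⊆ S1 ∪ S0)
    (hdisj : Disjoint S1 S0) {a b : ℝ} (ha : a ∈ I) (hb : b ∈ I) (ha1 : a ∈ S1) (hb0 : b ∈ S0)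
    (G H : ℕ → Set ℝ) (hG : ∀ j, IsClosed (G j)) (hH : ∀ j, IsClosed (H j))
    (hSG : S1 ⊆ ⋃ j, G j) (hSH : S0 ⊆ ⋃ j, H j)
    (hGS : ∀ j, Disjoint (G j) S0) (hHS : ∀ j, Disjoint (H j) S1)
    (h1 : ∀ t ∈ S1, ∀ δ > 0, ¬ Set.Ioo t (t + δ) ⊆ S0)
    (h2 : ∀ t ∈ S1, ∀ δ > 0, ¬ Set.Ioo (t - δ) t ⊆ S0)
    (h3 : ∀ t ∈ S0, ∀ δ > 0, ¬ Set.Ioo t (t + δ) ⊆ S1)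
    (h4 : ∀ t ∈ S0, ∀ δ > 0, ¬ Set.Ioo (t - δ) t ⊆ S1) : False := by
  obtain ⟨d, -, hd⟩ := line_D hI cover ha hb ha1 hb0
  set D := closure (S1 ∩ I) ∩ closure (S0 ∩ I) with hD
  have hDc : IsClosed D := isClosed_closure.inter isClosed_closure
  have hDI : D ⊆ I := fun x hx => closure_minimal Set.inter_subset_right hIc hx.1
  have : Nonempty D := ⟨⟨d, hd⟩⟩
  have : CompleteSpace D := hDc.completeSpace_coe
  obtain ⟨i, ⟨x, hx⟩⟩ := nonempty_interior_of_iUnion_of_closed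
    (X := D) (f := fun i : ℕ ⊕ ℕ => (Subtype.val ⁻¹' (Sum.elim G H i) : Set D))
    (by
      intro i; apply IsClosed.preimage continuous_subtype_val
      rcases i with i | i
      · exact hG i
      · exact hH i)
    (by
      rw [Set.eq_univ_iff_forall]
      intro x
      rcases cover (hDI x.2) with h | h
      · obtain ⟨j, hj⟩ := Set.mem_iUnion.1 (hSG h)
        exact Set.mem_iUnion.2 ⟨Sum.inl j, hj⟩
      · obtain ⟨j, hj⟩ := Set.mem_iUnion.1 (hSH h)
        exact Set.mem_iUnion.2 ⟨Sum.inr j, hj⟩)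
  rw [mem_interior_iff_mem_nhds, Metric.mem_nhds_iff] at hx
  obtain ⟨δ, hδ, hball⟩ := hx
  have hU : ∀ t ∈ D, |t - x| < δ → t ∈ Sum.elim G H i := by
    intro t ht htx
    have : (⟨t, ht⟩ : D) ∈ ball x δ := by
      rw [mem_ball, Subtype.dist_eq, Real.dist_eq]; exact htx
    exact hball this
  rcases i with i | i
  · refine line_half hI hIc cover h1 h2 hδ x.2 hdisj (fun t ht htx => ?_)
    rcases cover (hDI ht) with h | h
    · exact h
    · exact (Set.disjoint_left.1 (hGS i) (hU t ht htx) h).elim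
  · refine line_half (S1 := S0) (S0 := S1) hI hIc (by rwa [Set.union_comm]) h3 h4 hδ
      ⟨x.2.2, x.2.1⟩ hdisj.symm (fun t ht htx => ?_)
    rcases cover (hDI ⟨ht.2, ht.1⟩) with h | h
    · exact (Set.disjoint_left.1 (hHS i) (hU t ⟨ht.2, ht.1⟩ htx) h).elim
    · exact h

namespace Cyl
variable {k : ℕ} {e : EE (k + 1)} (C : Cyl k e)

/-- reversed orientation -/
def neg : Cyl k (-e) where
  J := ((MeasurableEquiv.neg ℝ).prodCongr (MeasurableEquiv.refl (EE k))).trans C.J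
  mp := by
    refine MeasurePreserving.trans ?_ C.mp
    exact (Measure.measurePreserving_neg (volume : Measure ℝ)).prod (MeasurePreserving.id _)
  P := C.P
  hJ t y := by
    have : (((MeasurableEquiv.neg ℝ).prodCongr (MeasurableEquiv.refl (EE k))).trans C.J) (t, y)
      = C.J (-t, y) := rfl
    rw [this, C.hJ]; simp
  he := by rw [norm_neg]; exact C.he
  orth y := by rw [inner_neg_left, C.orth, neg_zero]

@[simp] lemma neg_J (t : ℝ) (y : EE k) : C.neg.J (t, y) = C.J (-t, y) := rfl

lemma slab_null {F : Set (EE (k + 1))} (hF : MeasurableSet F) {c R : ℝ} (hc : 0 < c) (hR : 0 < R)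
    (hck : c * 3 ^ (k + 2) ≤ (volume (ball (0 : EE k) 1)).toReal) (a : ℝ) :
    volume (C.pr '' {x | (x ∈ GG F c R ∧ ∀ s ∈ Set.Ioo 0 R, HasDensity F (x + s • e) 0) ∧
      C.ht x ∈ Set.Icc a (a + R / 3)}) = 0 := by
  set Q := {x | (x ∈ GG F c R ∧ ∀ s ∈ Set.Ioo 0 R, HasDensity F (x + s • e) 0) ∧
      C.ht x ∈ Set.Icc a (a + R / 3)} with hQ
  set A := C.pr '' Q with hA
  have hbes := Besicovitch.ae_tendsto_measure_inter_div (volume : Measure (EE k)) A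
  have hslice := C.ae_slice (ae_dens hF)
  have hest : ∀ y0 : EE k, ∀ r ∈ Set.Ioo 0 (R / 3),
      volume (A ∩ closedBall y0 r) ≤ ENNReal.ofReal (c * (3 : ℝ) ^ (k + 1) * r ^ k) := by
    intro y0 r hr
    obtain ⟨hr0, hr1⟩ := hr
    rcases (A ∩ closedBall y0 r).eq_empty_or_nonempty with hemp | hne
    · rw [hemp]; simp
    set T := C.ht '' {x ∈ Q | C.pr x ∈ closedBall y0 r} with hT
    have hTne : T.Nonempty := by
      obtain ⟨y, ⟨x, hx, rfl⟩, hy⟩ := hne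
      exact ⟨_, x, ⟨hx, hy⟩, rfl⟩
    have hTb : BddAbove T := by
      refine ⟨a + R / 3, ?_⟩
      rintro _ ⟨x, hx, rfl⟩
      exact hx.1.2.2
    obtain ⟨_, ⟨x1, ⟨hx1Q, hx1b⟩, rfl⟩, hx1⟩ :=
      exists_lt_of_lt_csSup hTne (show sSup T - r < sSup T by linarith)
    have hB : MeasurableSet (Fᶜ ∩ ball x1 (3 * r)) := hF.compl.inter measurableSet_ball
    have hv := hx1Q.1.1 (3 * r) ⟨by linarith, by linarith⟩
    rw [C.vol_eq hB] at hv
    set g : EE k → ℝ≥0∞ := fun y => volume {t : ℝ | C.J (t, y) ∈ Fᶜ ∩ ball x1 (3 * r)} with hg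
    have hgm : Measurable g := by
      have := measurable_measure_prodMk_right (μ := (volume : Measure ℝ)) (C.J.measurable hB)
      exact this
    have hmark := mul_meas_ge_le_lintegral (μ := (volume : Measure (EE k))) hgm (ENNReal.ofReal r)
    have hsub : (A ∩ closedBall y0 r : Set (EE k)) ≤ᵐ[volume] {y | ENNReal.ofReal r ≤ g y} := by
      filter_upwards [hslice] with y hy hyA
      obtain ⟨⟨x, hx, rfl⟩, hyb⟩ := hyA
      change ENNReal.ofReal r ≤ g (C.pr x)
      have hseg : (Set.Ioo (C.ht x1 + r) (C.ht x1 + 2 * r) : Set ℝ) ≤ᵐ[volume]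
          {t : ℝ | C.J (t, C.pr x) ∈ Fᶜ ∩ ball x1 (3 * r)} := by
        filter_upwards [hy] with t ht htI
        have htI : t ∈ Set.Ioo (C.ht x1 + r) (C.ht x1 + 2 * r) := htI
        have hle : C.ht x ≤ sSup T := le_csSup hTb ⟨x, ⟨hx, hyb⟩, rfl⟩
        constructor
        · have h0 := hx.1.2 (t - C.ht x) ⟨by linarith [htI.1], by
            linarith [htI.2, hx.2.1, hx1Q.2.2]⟩
          rw [C.J_add] at h0
          rw [show C.ht x + (t - C.ht x) = t by ring] at h0
          intro hF'
          exact dens_unique h0 (ht.1 hF')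
        · rw [mem_ball]
          have h1 := C.dist_sq t (C.ht x1) (C.pr x) (C.pr x1)
          rw [C.J_ht_pr] at h1
          have h2 : dist (C.pr x) (C.pr x1) ≤ 2 * r := by
            have := dist_triangle_right (C.pr x) (C.pr x1) y0
            rw [mem_closedBall] at hyb hx1b
            linarith
          have h3 : dist (C.pr x) (C.pr x1) ^ 2 ≤ (2 * r) ^ 2 := by gcongr
          have h4 : (t - C.ht x1) ^ 2 ≤ (2 * r) ^ 2 := by
            apply sq_le_sq'  <;> linarith [htI.1, htI.2]
          apply lt_of_pow_lt_pow_left₀ 2 (by positivity)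
          nlinarith
      have := measure_mono_ae hseg
      rw [Real.volume_Ioo] at this
      rwa [show C.ht x1 + 2 * r - (C.ht x1 + r) = r by ring] at this
    have h5 := measure_mono_ae hsub
    have h6 : ENNReal.ofReal r * volume (A ∩ closedBall y0 r)
        ≤ ENNReal.ofReal r * ENNReal.ofReal (c * (3 : ℝ) ^ (k + 1) * r ^ k) := by
      rw [← ENNReal.ofReal_mul hr0.le]
      refine ((mul_le_mul_right h5 _).trans hmark).trans (hv.trans (le_of_eq ?_))
      congr 1
      ring
    exact (ENNReal.mul_le_mul_iff_right (by simpa using hr0) ofReal_ne_top).1 h6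
  have hfin : ∀ᵐ y ∂(volume : Measure (EE k)).restrict A, False := by
    filter_upwards [hbes] with y hy
    have hev : ∀ᶠ r in nhdsWithin (0 : ℝ) (Set.Ioi 0),
        volume (A ∩ closedBall y r) / volume (closedBall y r) ≤ ENNReal.ofReal (1 / 3) := by
      filter_upwards [Ioo_mem_nhdsGT (show (0 : ℝ) < R / 3 by linarith)] with r hr
      apply ENNReal.div_le_of_le_mul
      refine (hest y r hr).trans ?_
      have hcb : volume (closedBall y r) = ENNReal.ofReal (r ^ k)
          * volume (ball (0 : EE k) 1) := by
        have := Measure.addHaar_closedBall (volume : Measure (EE k)) y hr.1.le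
        simpa using this
      have hrk : 0 < r ^ k := pow_pos hr.1 k
      rw [hcb, ← ENNReal.ofReal_toReal
        (measure_ball_lt_top (μ := volume) (x := (0 : EE k)) (r := 1)).ne,
        ← ENNReal.ofReal_mul hrk.le, ← ENNReal.ofReal_mul (by norm_num)]
      apply ENNReal.ofReal_le_ofReal
      have := mul_le_mul_of_nonneg_left hck hrk.le
      rw [pow_succ] at this
      nlinarith
    have := le_of_tendsto hy hev
    rw [← ENNReal.ofReal_one, ENNReal.ofReal_le_ofReal_iff (by norm_num)] at this
    norm_num at this
  rw [ae_iff] at hfin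
  simpa using hfin

lemma up_null {F : Set (EE (k + 1))} (hF : MeasurableSet F) {c R : ℝ} (hc : 0 < c) (hR : 0 < R)
    (hck : c * 3 ^ (k + 2) ≤ (volume (ball (0 : EE k) 1)).toReal) :
    ∀ᵐ y : EE k, ∀ t, ¬ (C.J (t, y) ∈ GG F c R ∧
      ∀ s ∈ Set.Ioo 0 R, HasDensity F (C.J (t + s, y)) 0) := by
  have h : ∀ᵐ y : EE k, ∀ i : ℤ, y ∉ C.pr '' {x | (x ∈ GG F c R ∧
      ∀ s ∈ Set.Ioo 0 R, HasDensity F (x + s • e) 0) ∧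
      C.ht x ∈ Set.Icc (i * (R / 3)) (i * (R / 3) + R / 3)} := by
    rw [ae_all_iff]; intro i
    exact measure_eq_zero_iff_ae_notMem.1 (C.slab_null hF hc hR hck _)
  filter_upwards [h] with y hy t ht
  apply hy ⌊t / (R / 3)⌋
  refine ⟨C.J (t, y), ⟨⟨ht.1, ?_⟩, ?_⟩, C.pr_J t y⟩
  · intro s hs
    rw [C.J_add]
    simpa using ht.2 s hs
  · rw [C.ht_J]
    have h3 : 0 < R / 3 := by positivity
    have h1 := Int.floor_le (t / (R / 3))
    have h2 := Int.lt_floor_add_one (t / (R / 3))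
    rw [le_div_iff₀ h3] at h1
    rw [div_lt_iff₀ h3] at h2
    constructor <;> linarith

lemma ud_null {F : Set (EE (k + 1))} (hF : MeasurableSet F) {c : ℝ} (hc : 0 < c)
    (hck : c * 3 ^ (k + 2) ≤ (volume (ball (0 : EE k) 1)).toReal) :
    ∀ᵐ y : EE k, ∀ t, HasDensity F (C.J (t, y)) 1 → ∀ δ > 0,
      (¬ Set.Ioo t (t + δ) ⊆ {s | HasDensity F (C.J (s, y)) 0}) ∧
      (¬ Set.Ioo (t - δ) t ⊆ {s | HasDensity F (C.J (s, y)) 0}) := by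
  have h1 : ∀ᵐ y : EE k, ∀ j : ℕ, ∀ t, ¬ (C.J (t, y) ∈ GG F c (1 / ((j : ℝ) + 1)) ∧
      ∀ s ∈ Set.Ioo 0 (1 / ((j : ℝ) + 1)), HasDensity F (C.J (t + s, y)) 0) := by
    rw [ae_all_iff]; intro j
    exact C.up_null hF hc (by positivity) hck
  have h2 : ∀ᵐ y : EE k, ∀ j : ℕ, ∀ t, ¬ (C.neg.J (t, y) ∈ GG F c (1 / ((j : ℝ) + 1)) ∧
      ∀ s ∈ Set.Ioo 0 (1 / ((j : ℝ) + 1)), HasDensity F (C.neg.J (t + s, y)) 0) := by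
    rw [ae_all_iff]; intro j
    exact C.neg.up_null hF hc (by positivity) hck
  filter_upwards [h1, h2] with y hy1 hy2 t ht δ hδ
  obtain ⟨R, hR, hG⟩ := GG_of_dens hF ht hc
  obtain ⟨j, hj⟩ := exists_nat_one_div_lt (lt_min hR hδ)
  have hjR := hj.trans_le (min_le_left _ _)
  have hjδ := hj.trans_le (min_le_right _ _)
  constructor
  · intro hsub
    refine hy1 j t ⟨GG_mono hjR.le hG, fun s hs => hsub ⟨by linarith [hs.1], by linarith [hs.2]⟩⟩
  · intro hsub
    refine hy2 j (-t) ⟨?_, fun s hs => ?_⟩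
    · rw [neg_J, neg_neg]; exact GG_mono hjR.le hG
    · rw [neg_J]; exact hsub ⟨by linarith [hs.2], by linarith [hs.1]⟩

lemma federer {F : Set (EE (k + 1))} (hF : MeasurableSet F) :
    ∀ᵐ y : EE k, ∀ t1 t2, HasDensity F (C.J (t1, y)) 1 → HasDensity F (C.J (t2, y)) 0 →
      ∃ t ∈ Set.uIcc t1 t2, C.J (t, y) ∈ essBoundary F := by
  have hvk := vball_pos (0 : EE k) one_pos
  have hw := vball_pos (0 : EE (k + 1)) one_pos
  set c := min ((volume (ball (0 : EE k) 1)).toReal / 3 ^ (k + 2))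
    ((volume (ball (0 : EE (k + 1)) 1)).toReal / 3) with hcdef
  have hc : 0 < c := lt_min (by positivity) (by positivity)
  have hck : c * 3 ^ (k + 2) ≤ (volume (ball (0 : EE k) 1)).toReal := by
    rw [← le_div_iff₀ (by positivity)]; exact min_le_left _ _
  have hcw : c * 3 ≤ (volume (ball (0 : EE (k + 1)) 1)).toReal := by
    rw [← le_div_iff₀ (by positivity)]; exact min_le_right _ _
  filter_upwards [C.ud_null hF hc hck, C.ud_null hF.compl hc hck] with y hy1 hy2 t1 t2 ht1 ht2
  by_contra hcon
  push Not at hcon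
  have hcy : Continuous (fun t : ℝ => C.J (t, y)) := C.cont.comp (by fun_prop)
  refine line_baire (S1 := {t | HasDensity F (C.J (t, y)) 1})
    (S0 := {t | HasDensity F (C.J (t, y)) 0}) (I := Set.uIcc t1 t2) Set.ordConnected_uIcc
    isClosed_Icc ?_ ?_ Set.left_mem_uIcc Set.right_mem_uIcc ht1 ht2
    (fun j => (fun t : ℝ => C.J (t, y)) ⁻¹' (GG F c (1 / ((j : ℝ) + 1))))
    (fun j => (fun t : ℝ => C.J (t, y)) ⁻¹' (GG Fᶜ c (1 / ((j : ℝ) + 1))))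
    (fun j => (GG_closed _ _ _).preimage hcy) (fun j => (GG_closed _ _ _).preimage hcy)
    ?_ ?_ ?_ ?_ (fun t ht δ hδ => (hy1 t ht δ hδ).1) (fun t ht δ hδ => (hy1 t ht δ hδ).2) ?_ ?_
  · intro t ht
    have := hcon t ht
    simp only [essBoundary, Set.mem_ofPred_eq, not_and_or, not_not] at this
    exact this.symm
  · rw [Set.disjoint_left]; intro t h1 h0; exact dens_unique h0 h1
  · intro t ht
    obtain ⟨R, hR, hG⟩ := GG_of_dens hF ht hc
    obtain ⟨j, hj⟩ := exists_nat_one_div_lt hR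
    exact Set.mem_iUnion.2 ⟨j, GG_mono hj.le hG⟩
  · intro t ht
    obtain ⟨R, hR, hG⟩ := GG_of_dens hF.compl ((dens_compl_iff1 hF _).2 ht) hc
    obtain ⟨j, hj⟩ := exists_nat_one_div_lt hR
    exact Set.mem_iUnion.2 ⟨j, GG_mono hj.le hG⟩
  · intro j; rw [Set.disjoint_left]; intro t h1 h0
    exact GG_not_dens hF hc (by positivity) hcw h1 h0
  · intro j; rw [Set.disjoint_left]; intro t h1 h0
    exact GG_not_dens hF.compl hc (by positivity) hcw h1 ((dens_compl_iff0 hF _).2 h0)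
  · intro t ht δ hδ
    have := (hy2 t ((dens_compl_iff1 hF _).2 ht) δ hδ).1
    simpa only [dens_compl_iff0 hF] using this
  · intro t ht δ hδ
    have := (hy2 t ((dens_compl_iff1 hF _).2 ht) δ hδ).2
    simpa only [dens_compl_iff0 hF] using this

end Cyl

lemma muHE_image_le {X Y : Type*} [MetricSpace X] [MeasurableSpace X] [BorelSpace X]
    [MetricSpace Y] [MeasurableSpace Y] [BorelSpace Y] {K : NNReal} {f : X → Y} {s : Set X}
    (hf : LipschitzOnWith K f s) (k : ℕ) :
    (μHE[k] : Measure Y) (f '' s) ≤ (K : ℝ≥0∞) ^ k * (μHE[k] : Measure X) s := by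
  simp_rw [Measure.euclideanHausdorffMeasure_def, Measure.smul_apply]
  have := hf.hausdorffMeasure_image_le (d := k) (Nat.cast_nonneg k)
  rw [ENNReal.rpow_natCast] at this
  rw [ENNReal.smul_def, ENNReal.smul_def, smul_eq_mul, smul_eq_mul, mul_left_comm]
  gcongr

namespace Cyl
variable {k : ℕ} {e : EE (k + 1)} (C : Cyl k e)

lemma ae_pr {p : EE k → Prop} (h : ∀ᵐ y, p y) : ∀ᵐ x, p (C.pr x) := by
  have h1 : ∀ᵐ q : ℝ × EE k, p q.2 :=
    (Measure.quasiMeasurePreserving_snd (μ := (volume : Measure ℝ))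
      (ν := (volume : Measure (EE k)))).ae h
  exact (MeasurePreserving.symm C.J C.mp).quasiMeasurePreserving.ae h1

lemma vol_pr_le (S : Set (EE (k + 1))) : volume (C.pr '' S) ≤ (μHE[k] : Measure _) S := by
  have := muHE_image_le (C.lip_pr.lipschitzOnWith (s := S)) k
  rw [EuclideanSpace.euclideanHausdorffMeasure_eq_volume] at this
  simpa using this

lemma sweep_aux (C : Cyl k e) (N : Set (EE (k + 1))) {τ θ : ℝ} (hτ : 0 < τ) (hθ : 0 < θ) :
    volume {x | ∃ s ∈ Set.Icc 0 τ, x + s • e ∈ N}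
      ≤ ENNReal.ofReal (θ + τ) * (μHE[k] : Measure _) N := by
  set I : ℤ → Set (EE (k + 1)) := fun i => {x | ⌊C.ht x / θ⌋ = i} with hI
  have hIm : ∀ i, MeasurableSet (I i) := by
    intro i
    have : Measurable fun x => ⌊C.ht x / θ⌋ := (C.meas_ht.div_const θ).floor
    exact this (measurableSet_singleton i)
  have hId : Pairwise (Function.onFun Disjoint I) := by
    intro i j hij
    rw [Function.onFun, Set.disjoint_left]
    intro x hx hy
    exact hij (hx.symm.trans hy)
  have hIu : ⋃ i, I i = Set.univ := by
    rw [Set.eq_univ_iff_forall]; intro x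
    exact Set.mem_iUnion.2 ⟨_, rfl⟩
  have hsub : C.J ⁻¹' {x | ∃ s ∈ Set.Icc 0 τ, x + s • e ∈ N} ⊆
      ⋃ i : ℤ, (Set.Icc (i * θ - τ) (i * θ + θ)) ×ˢ (C.pr '' (I i ∩ N)) := by
    rintro ⟨t, y⟩ ⟨s, hs, hN⟩
    rw [C.J_add, ht_J, pr_J] at hN
    have h1 := Int.floor_le ((t + s) / θ)
    have h2 := Int.lt_floor_add_one ((t + s) / θ)
    rw [le_div_iff₀ hθ] at h1
    rw [div_lt_iff₀ hθ] at h2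
    refine Set.mem_iUnion.2 ⟨⌊(t + s) / θ⌋, ⟨?_, ?_⟩, ?_⟩
    · change _ ≤ t
      linarith [hs.2]
    · change t ≤ _
      linarith [hs.1]
    · exact ⟨_, ⟨by simp [hI], hN⟩, C.pr_J _ _⟩
  rw [← C.mp.measure_preimage_equiv]
  calc _ ≤ _ := measure_mono hsub
    _ ≤ ∑' i : ℤ, volume ((Set.Icc (i * θ - τ) (i * θ + θ)) ×ˢ (C.pr '' (I i ∩ N))) :=
        measure_iUnion_le _
    _ ≤ ∑' i : ℤ, ENNReal.ofReal (θ + τ) * (Measure.restrict μHE[k] N) (I i) := by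
        refine ENNReal.tsum_le_tsum fun i => ?_
        rw [Measure.volume_eq_prod, Measure.prod_prod, Real.volume_Icc,
          Measure.restrict_apply (hIm i)]
        gcongr
        · linarith
        · exact C.vol_pr_le _
    _ = _ := by
        rw [ENNReal.tsum_mul_left, ← measure_iUnion hId hIm, hIu, Measure.restrict_apply_univ]

lemma sweep (C : Cyl k e) (N : Set (EE (k + 1))) {τ : ℝ} (hτ : 0 < τ) :
    volume {x | ∃ s ∈ Set.Icc 0 τ, x + s • e ∈ N}
      ≤ ENNReal.ofReal τ * (μHE[k] : Measure _) N := by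
  by_cases hN : (μHE[k] : Measure _) N = ⊤
  · rw [hN, ENNReal.mul_top (by simpa using hτ)]; exact le_top
  have h2 : Tendsto (fun θ : ℝ => ENNReal.ofReal (θ + τ) * (μHE[k] : Measure _) N)
      (nhdsWithin 0 (Set.Ioi 0)) (nhds (ENNReal.ofReal (0 + τ) * (μHE[k] : Measure _) N)) := by
    refine ENNReal.Tendsto.mul_const ?_ (Or.inr hN)
    have : Continuous (fun d : ℝ => ENNReal.ofReal (d + τ)) :=
      ENNReal.continuous_ofReal.comp (by fun_prop)
    exact (this.tendsto 0).mono_left nhdsWithin_le_nhds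
  rw [zero_add] at h2
  refine ge_of_tendsto h2 ?_
  filter_upwards [self_mem_nhdsWithin] with θ hθ using C.sweep_aux N hτ hθ

lemma shift_le (C : Cyl k e) {F : Set (EE (k + 1))} (hF : MeasurableSet F)
    (hN : (μHE[k] : Measure _) (essBoundary F) ≠ ⊤) {φ : EE (k + 1) → ℝ}
    (hφ : Continuous φ) {L : ℝ} (hL : 0 ≤ L) (hLip : ∀ x y, φ x ≤ φ y + L * dist x y)
    {t : ℝ} (ht : 0 < t) :
    ∫⁻ x in F, ENNReal.ofReal (φ (x - t • e)) ≤ (∫⁻ x in F, ENNReal.ofReal (φ x))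
      + ENNReal.ofReal t * ∫⁻ x, (ENNReal.ofReal (φ x + L * t))
        ∂(Measure.restrict μHE[k] (essBoundary F)) := by
  set ν : Measure (EE (k + 1)) := Measure.restrict μHE[k] (essBoundary F) with hν
  have hφm : Measurable fun x => ENNReal.ofReal (φ x) := hφ.measurable.ennreal_ofReal
  set F' : Set (EE (k + 1)) := (fun z => z + t • e) ⁻¹' F with hF'
  have hF'm : MeasurableSet F' := (measurable_add_const (t • e)) hF
  set bad := F' \ F with hbad
  have e1 : ∫⁻ x in F, ENNReal.ofReal (φ (x - t • e)) = ∫⁻ z in F', ENNReal.ofReal (φ z) := by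
    have := (measurePreserving_add_right (volume : Measure (EE (k + 1))) (t • e)).setLIntegral_comp_preimage
      hF (f := fun x => ENNReal.ofReal (φ (x - t • e))) (hφm.comp (measurable_sub_const _))
    rw [← this]
    simp [hF']
  have e2 : ∫⁻ z in F', ENNReal.ofReal (φ z) ≤ (∫⁻ z in F, ENNReal.ofReal (φ z))
      + ∫⁻ z in bad, ENNReal.ofReal (φ z) := by
    refine le_trans (lintegral_mono_set ?_) (lintegral_union_le _ F bad)
    intro z hz
    by_cases h : z ∈ F
    · exact Or.inl h
    · exact Or.inr ⟨hz, h⟩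
  have hae1 : ∀ᵐ z, (z + t • e ∈ F → HasDensity F (z + t • e) 1) := by
    have := (measurePreserving_add_right (volume : Measure (EE (k + 1))) (t • e)).quasiMeasurePreserving.ae
      (ae_dens hF)
    filter_upwards [this] with z hz using hz.1
  have e3 : ∫⁻ z in bad, ENNReal.ofReal (φ z) ≤ ENNReal.ofReal t *
      ∫⁻ x, (ENNReal.ofReal (φ x + L * t)) ∂ν := by
    have hm2 : Measurable fun x => ENNReal.ofReal (φ x + L * t) :=
      (hφ.add continuous_const).measurable.ennreal_ofReal
    have : IsFiniteMeasure ν := ⟨by rw [hν, Measure.restrict_apply_univ]; exact lt_top_iff_ne_top.2 hN⟩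
    rw [layercake _ hφm, layercake _ hm2, ← lintegral_const_mul' _ _ ofReal_ne_top]
    refine setLIntegral_mono_ae' measurableSet_Ioi (Eventually.of_forall fun l hl => ?_)
    rw [Measure.restrict_apply (measurableSet_lt measurable_const hφm), hν,
      Measure.restrict_apply (measurableSet_lt measurable_const hm2)]
    refine le_trans (measure_mono_ae ?_) (C.sweep _ ht)
    filter_upwards [C.ae_pr (C.federer hF), hae1, ae_dens hF] with z h1 h2 h3 hz
    obtain ⟨hz1, hz2, hz3⟩ := hz
    have hd1 := h2 hz2
    have hd0 := h3.2 hz3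
    rw [C.J_add] at hd1
    rw [← C.J_ht_pr z] at hd0
    obtain ⟨s, hs, hsN⟩ := h1 _ _ hd1 hd0
    rw [Set.uIcc_of_ge (by linarith)] at hs
    have hzs : z + (s - C.ht z) • e = C.J (s, C.pr z) := by
      rw [C.J_add, show C.ht z + (s - C.ht z) = s by ring]
    refine ⟨s - C.ht z, ⟨by linarith [hs.1], by linarith [hs.2]⟩, ?_, ?_⟩
    · have hz1 : ENNReal.ofReal l < ENNReal.ofReal (φ z) := hz1
      change ENNReal.ofReal l < ENNReal.ofReal _
      refine hz1.trans_le (ENNReal.ofReal_le_ofReal ?_)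
      refine (hLip z (z + (s - C.ht z) • e)).trans ?_
      have : dist z (z + (s - C.ht z) • e) ≤ t := by
        rw [dist_self_add_right, norm_smul, C.he, mul_one, Real.norm_eq_abs, abs_le]
        constructor <;> linarith [hs.1, hs.2]
      nlinarith
    · rw [hzs]; exact hsN
  rw [e1]
  exact e2.trans (by gcongr)
end Cyl

lemma shift_le {k : ℕ} {F : Set (EE (k + 1))} (hF : MeasurableSet F)
    (hN : (μHE[k] : Measure _) (essBoundary F) ≠ ⊤) {φ : EE (k + 1) → ℝ}
    (hφ : Continuous φ) {L : ℝ} (hL : 0 ≤ L) (hLip : ∀ x y, φ x ≤ φ y + L * dist x y)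
    {δ : ℝ} {v : EE (k + 1)} (hv : ‖v‖ ≤ δ) :
    ∫⁻ x in F, ENNReal.ofReal (φ (x - v)) ≤ (∫⁻ x in F, ENNReal.ofReal (φ x))
      + ENNReal.ofReal δ * ∫⁻ x, (ENNReal.ofReal (φ x + L * δ))
        ∂(Measure.restrict μHE[k] (essBoundary F)) := by
  rcases eq_or_ne v 0 with rfl | hv0
  · simp
  have hp : 0 < ‖v‖ := norm_pos_iff.2 hv0
  obtain ⟨C⟩ := exists_cyl k (‖v‖⁻¹ • v) (by
    rw [norm_smul, norm_inv, norm_norm, inv_mul_cancel₀ hp.ne'])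
  have h := C.shift_le hF hN hφ hL hLip hp
  rw [smul_inv_smul₀ hp.ne'] at h
  refine h.trans ?_
  gcongr

lemma tonelli_ball {k : ℕ} (μ : Measure (EE (k + 1))) [SFinite μ] {ρ : EE (k + 1) → ℝ}
    (hρc : Continuous ρ) (hintg : ∫⁻ z, ENNReal.ofReal (ρ z) = 1) {κ : ℝ}
    (hsupp : ∀ z, κ ≤ ‖z‖ → ρ z = 0) {G G' : Set (EE (k + 1))} (hG : MeasurableSet G)
    (hG' : MeasurableSet G') (hGG : ∀ x ∈ G, ∀ y, ‖y - x‖ < κ → y ∈ G') :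
    ∫⁻ x in G, ∫⁻ y, ENNReal.ofReal (ρ (y - x)) ∂μ ≤ μ G' := by
  have hm : Measurable fun p : EE (k + 1) × EE (k + 1) => ENNReal.ofReal (ρ (p.2 - p.1)) :=
    (hρc.comp (by fun_prop)).measurable.ennreal_ofReal
  rw [lintegral_lintegral_swap hm.aemeasurable, ← lintegral_indicator_one hG']
  refine lintegral_mono fun y => ?_
  by_cases hy : y ∈ G'
  · rw [Set.indicator_of_mem hy]
    refine (setLIntegral_le_lintegral _ _).trans ?_
    rw [lintegral_sub_left_eq_self (fun x => ENNReal.ofReal (ρ x)) y, hintg]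
    simp
  · rw [Set.indicator_of_notMem hy]
    rw [nonpos_iff_eq_zero]
    refine setLIntegral_eq_zero hG ?_
    intro x hx
    have : κ ≤ ‖y - x‖ := by
      by_contra h; exact hy (hGG x hx y (not_le.1 h))
    simp [hsupp _ this]

lemma iso1 {k : ℕ} {F : Set (EE (k + 1))} (hF : MeasurableSet F)
    (hN : (μHE[k] : Measure _) (essBoundary F) ≠ ⊤) {ρ : EE (k + 1) → ℝ}
    (hρc : Continuous ρ) {L : ℝ} (hL : 0 ≤ L) (hLip : ∀ x y, ρ x ≤ ρ y + L * dist x y)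
    (hintg : ∫⁻ z, ENNReal.ofReal (ρ z) = 1) {κ : ℝ}
    (hsupp : ∀ z, κ ≤ ‖z‖ → ρ z = 0) {a b r δ σ v w : ℝ} (hab : a < b) (hδ : 0 < δ)
    (hbr : b + δ + κ < r) (hκ : 0 < κ)
    (hw : 0 < w) (hwv : volume (ball (0 : EE (k + 1)) 1) = ENNReal.ofReal w) (hσ : 0 < σ)
    (hv : 0 < v)
    (hvol : ENNReal.ofReal v ≤ volume {x : EE (k + 1) | ‖x‖ < a ∧
      ENNReal.ofReal σ < ∫⁻ y in F, ENNReal.ofReal (ρ (y - x))}) :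
    ENNReal.ofReal (σ * (((k + 1 : ℕ) : ℝ) * w ^ (1 / ((k + 1 : ℕ) : ℝ))
      * (v ^ (1 / ((k + 1 : ℕ) : ℝ))) ^ (k + 1 - 1))) ≤
      (Measure.restrict μHE[k] (essBoundary F)) (ball 0 r)
        + ENNReal.ofReal (L * δ) * (Measure.restrict μHE[k] (essBoundary F)) Set.univ
          * volume (ball (0 : EE (k + 1)) r)
        + ENNReal.ofReal (1 / (b - a)) * volume (F ∩ (ball 0 r \ ball 0 (a - κ))) := by
  set ν : Measure (EE (k + 1)) := Measure.restrict μHE[k] (essBoundary F) with hν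
  have hνf : IsFiniteMeasure ν :=
    ⟨by rw [hν, Measure.restrict_apply_univ]; exact lt_top_iff_ne_top.2 hN⟩
  set K := (((k + 1 : ℕ) : ℝ) * w ^ (1 / ((k + 1 : ℕ) : ℝ))
      * (v ^ (1 / ((k + 1 : ℕ) : ℝ))) ^ (k + 1 - 1)) with hK
  have hKpos : 0 ≤ K := by positivity
  have hh : 0 < b - a := sub_pos.2 hab
  have hm : Measurable fun p : EE (k + 1) × EE (k + 1) => ENNReal.ofReal (ρ (p.2 - p.1)) :=
    (hρc.comp (by fun_prop)).measurable.ennreal_ofReal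
  set u : EE (k + 1) → ℝ≥0∞ := fun x => ∫⁻ y in F, ENNReal.ofReal (ρ (y - x)) with hu
  have hum : Measurable u := Measurable.lintegral_prod_right' hm
  have hu1 : ∀ x, u x ≤ 1 := by
    intro x
    refine (setLIntegral_le_lintegral _ _).trans ?_
    rw [lintegral_sub_right_eq_self (fun x => ENNReal.ofReal (ρ x)) x, hintg]
  set P : EE (k + 1) → ℝ≥0∞ := fun x => ∫⁻ y, (ENNReal.ofReal (ρ (y - x) + L * δ)) ∂ν with hP
  have hm2 : Measurable fun p : EE (k + 1) × EE (k + 1) =>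
      ENNReal.ofReal (ρ (p.2 - p.1) + L * δ) :=
    ((hρc.comp (by fun_prop)).add continuous_const).measurable.ennreal_ofReal
  have hPm : Measurable P := Measurable.lintegral_prod_right' hm2
  set e : EE (k + 1) → ℝ := fun x => min 1 (max 0 ((b - ‖x‖) / (b - a))) with he
  have hec : Continuous e := by
    simp only [he]; fun_prop
  have he1 : ∀ x, e x ≤ 1 := fun x => min_le_left _ _
  have he0 : ∀ x, 0 ≤ e x := fun x => le_min zero_le_one (le_max_left _ _)
  have hea : ∀ x, ‖x‖ < a → e x = 1 := by
    intro x hx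
    have : 1 ≤ (b - ‖x‖) / (b - a) := by rw [one_le_div hh]; linarith
    exact min_eq_left (this.trans (le_max_right _ _))
  have heb : ∀ x, b ≤ ‖x‖ → e x = 0 := by
    intro x hx
    have : (b - ‖x‖) / (b - a) ≤ 0 := div_nonpos_of_nonpos_of_nonneg (by linarith) hh.le
    simp only [he]; rw [max_eq_left this]; simp
  have heL : ∀ x y : EE (k + 1), ‖y‖ ≤ δ → e (x + y) ≤ e x + δ / (b - a) := by
    intro x y hy
    have h1 : ‖x‖ ≤ ‖x + y‖ + ‖y‖ := by
      have := norm_sub_le (x + y) y; simpa using this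
    have h2 : (b - ‖x + y‖) / (b - a) ≤ (b - ‖x‖) / (b - a) + δ / (b - a) := by
      rw [← add_div]; gcongr; linarith
    have h3 : 0 ≤ δ / (b - a) := by positivity
    simp only [he]
    rcases le_total 1 (max 0 ((b - ‖x‖) / (b - a))) with h | h
    · rw [min_eq_left h]; have := min_le_left 1 (max 0 ((b - ‖x + y‖) / (b - a))); linarith
    · rw [min_eq_right h]
      refine (min_le_right _ _).trans (max_le ?_ ?_)
      · have := le_max_left 0 ((b - ‖x‖) / (b - a)); linarith
      · have := le_max_right 0 ((b - ‖x‖) / (b - a)); linarith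
  set f : EE (k + 1) → ℝ≥0∞ := fun x => u x * ENNReal.ofReal (e x) with hf
  have hfm : Measurable f := hum.mul hec.measurable.ennreal_ofReal
  set G1 : Set (EE (k + 1)) := ball 0 (b + δ) with hG1
  set G2 : Set (EE (k + 1)) := ball 0 (b + δ) \ ball 0 a with hG2
  have hG1m : MeasurableSet G1 := measurableSet_ball
  have hG2m : MeasurableSet G2 := measurableSet_ball.diff measurableSet_ball
  set g : EE (k + 1) → ℝ≥0∞ := fun x => f x + (G1.indicator (fun x => ENNReal.ofReal δ * P x) x
    + G2.indicator (fun x => ENNReal.ofReal (δ / (b - a)) * u x) x) with hg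
  have hg1m : Measurable (G1.indicator (fun x => ENNReal.ofReal δ * P x)) :=
    (hPm.const_mul _).indicator hG1m
  have hg2m : Measurable (G2.indicator (fun x => ENNReal.ofReal (δ / (b - a)) * u x)) :=
    (hum.const_mul _).indicator hG2m
  have hgm : Measurable g := hfm.add (hg1m.add hg2m)
  have hfg : ∀ x y : EE (k + 1), ‖y‖ < δ → f (x + y) ≤ g x := by
    intro x y hy
    by_cases hxy : b ≤ ‖x + y‖
    · simp [hf, heb _ hxy]
    have hx1 : x ∈ G1 := by
      rw [hG1, mem_ball_zero_iff]
      have := norm_sub_le (x + y) y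
      simp only [add_sub_cancel_right] at this
      linarith [not_le.1 hxy]
    have hux : u (x + y) ≤ u x + ENNReal.ofReal δ * P x := by
      have := shift_le hF hN (φ := fun z => ρ (z - x)) (hρc.comp (by fun_prop)) hL
        (fun z z' => by simpa [dist_sub_right] using hLip (z - x) (z' - x)) hy.le
      simp only [hu, hP]
      have e0 : ∀ z : EE (k + 1), z - (x + y) = z - y - x := fun z => by abel
      simp only [e0]
      exact this
    have hstep : f (x + y) ≤ u x * ENNReal.ofReal (e (x + y)) + ENNReal.ofReal δ * P x := by
      calc f (x + y) ≤ (u x + ENNReal.ofReal δ * P x) * ENNReal.ofReal (e (x + y)) := by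
            simp only [hf]; gcongr
        _ = u x * ENNReal.ofReal (e (x + y))
            + ENNReal.ofReal δ * P x * ENNReal.ofReal (e (x + y)) := add_mul _ _ _
        _ ≤ _ := by
            refine add_le_add le_rfl (mul_le_of_le_one_right' ?_)
            rw [← ENNReal.ofReal_one]; exact ENNReal.ofReal_le_ofReal (he1 _)
    refine hstep.trans ?_
    simp only [hg, Set.indicator_of_mem hx1]
    by_cases hxa : ‖x‖ < a
    · have hx2 : x ∉ G2 := fun h => h.2 (by rwa [mem_ball_zero_iff])
      rw [Set.indicator_of_notMem hx2, add_zero]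
      gcongr
      simp only [hf, hea x hxa]
      gcongr
      exact he1 _
    · have hx2 : x ∈ G2 := ⟨hx1, fun h => hxa (by rwa [mem_ball_zero_iff] at h)⟩
      rw [Set.indicator_of_mem hx2]
      have : u x * ENNReal.ofReal (e (x + y)) ≤ f x + ENNReal.ofReal (δ / (b - a)) * u x := by
        simp only [hf]
        rw [mul_comm (ENNReal.ofReal (δ / (b - a))), ← mul_add,
          ← ENNReal.ofReal_add (he0 _) (by positivity)]
        gcongr
        exact heL x y hy.le
      calc _ ≤ (f x + ENNReal.ofReal (δ / (b - a)) * u x) + ENNReal.ofReal δ * P x := by gcongr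
        _ = _ := by ring
  have hfsupp : ∀ t : ℝ, {x | ENNReal.ofReal t < f x} ⊆ ball 0 b := by
    intro t x hx
    rw [mem_ball_zero_iff]
    by_contra h
    have hx : ENNReal.ofReal t < f x := hx
    simp [hf, heb x (not_lt.1 h)] at hx
  have hffin : ∫⁻ x, f x ≠ ⊤ := by
    have : ∫⁻ x, f x ≤ volume (ball (0 : EE (k + 1)) b) := by
      rw [← lintegral_indicator_one measurableSet_ball]
      refine lintegral_mono fun x => ?_
      by_cases hx : x ∈ ball (0 : EE (k + 1)) b
      · rw [Set.indicator_of_mem hx]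
        exact (mul_le_mul' (hu1 x) (ENNReal.ofReal_le_ofReal (he1 x))).trans (by simp)
      · rw [mem_ball_zero_iff, not_lt] at hx
        simp [hf, heb x hx]
    exact (this.trans_lt measure_ball_lt_top).ne
  have hlow : (∫⁻ x, f x) + ENNReal.ofReal δ * ENNReal.ofReal (σ * K) ≤ ∫⁻ x, g x := by
    rw [layercake _ hfm, layercake _ hgm]
    have e1 : ENNReal.ofReal δ * ENNReal.ofReal (σ * K)
        = ∫⁻ t in Set.Ioi (0 : ℝ), (Set.Iio σ).indicator (fun _ => ENNReal.ofReal (δ * K)) t := by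
      rw [setLIntegral_indicator measurableSet_Iio, setLIntegral_const, Set.inter_comm,
        Set.Ioi_inter_Iio,
        Real.volume_Ioo, sub_zero, ← ENNReal.ofReal_mul hδ.le,
        ← ENNReal.ofReal_mul (by positivity)]
      congr 1; ring
    rw [e1, ← lintegral_add_right _ (measurable_const.indicator measurableSet_Iio)]
    refine setLIntegral_mono_ae' measurableSet_Ioi (Eventually.of_forall fun t ht => ?_)
    have ht : 0 < t := ht
    by_cases hts : t < σ
    · rw [Set.indicator_of_mem (show t ∈ Set.Iio σ from hts)]
      refine bm_lin (k + 1) (by omega) (measurableSet_lt measurable_const hfm)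
        (measurableSet_lt measurable_const hgm) hv ?_ ?_ hδ hw hwv ?_
      · refine hvol.trans (measure_mono ?_)
        rintro x ⟨hx1, hx2⟩
        change ENNReal.ofReal t < f x
        simp only [hf, hea x hx1, ENNReal.ofReal_one, mul_one]
        exact (ENNReal.ofReal_le_ofReal hts.le).trans_lt hx2
      · exact ((measure_mono (hfsupp t)).trans_lt measure_ball_lt_top).ne
      · intro x hx y hy
        have hx : ENNReal.ofReal t < f x := hx
        change ENNReal.ofReal t < g (x + y)
        have := hfg (x + y) (-y) (by rw [norm_neg]; rwa [mem_ball_zero_iff] at hy)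
        rw [add_neg_cancel_right] at this
        exact hx.trans_le this
    · rw [Set.indicator_of_notMem (show t ∉ Set.Iio σ from hts), add_zero]
      refine measure_mono fun x hx => ?_
      have hx : ENNReal.ofReal t < f x := hx
      exact hx.trans_le le_self_add
  have hup1 : ∫⁻ x in G1, P x ≤ ν (ball 0 r) + ENNReal.ofReal (L * δ) * ν Set.univ
          * volume (ball (0 : EE (k + 1)) r) := by
    have h1 : ∀ x, P x ≤ (∫⁻ y, ENNReal.ofReal (ρ (y - x)) ∂ν)
        + ENNReal.ofReal (L * δ) * ν Set.univ := by
      intro x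
      simp only [hP]
      rw [← lintegral_const, ← lintegral_add_right _ measurable_const]
      exact lintegral_mono fun y => ENNReal.ofReal_add_le
    calc ∫⁻ x in G1, P x ≤ ∫⁻ x in G1, ((∫⁻ y, ENNReal.ofReal (ρ (y - x)) ∂ν)
        + ENNReal.ofReal (L * δ) * ν Set.univ) := lintegral_mono h1
      _ = (∫⁻ x in G1, ∫⁻ y, ENNReal.ofReal (ρ (y - x)) ∂ν)
        + ENNReal.ofReal (L * δ) * ν Set.univ * volume G1 := by
          rw [lintegral_add_right _ measurable_const, setLIntegral_const]
      _ ≤ _ := by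
          gcongr
          · refine tonelli_ball ν hρc hintg hsupp hG1m measurableSet_ball ?_
            intro x hx y hy
            rw [hG1, mem_ball_zero_iff] at hx
            rw [mem_ball_zero_iff]
            have := norm_add_le (y - x) x
            rw [sub_add_cancel] at this
            linarith
          · exact ball_subset_ball (by linarith)
  have hup2 : ∫⁻ x in G2, u x ≤ volume (F ∩ (ball 0 r \ ball 0 (a - κ))) := by
    rw [Set.inter_comm, ← Measure.restrict_apply (measurableSet_ball.diff measurableSet_ball)]
    refine tonelli_ball (volume.restrict F) hρc hintg hsupp hG2m
      (measurableSet_ball.diff measurableSet_ball) ?_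
    intro x hx y hy
    have h1 := hx.1
    have h2 := hx.2
    rw [mem_ball_zero_iff] at h1 h2
    have h3 := norm_add_le (y - x) x
    rw [sub_add_cancel] at h3
    have h4 := norm_sub_le y (y - x)
    rw [_root_.sub_sub_cancel] at h4
    refine ⟨?_, ?_⟩
    · rw [mem_ball_zero_iff]; linarith
    · rw [mem_ball_zero_iff]; intro h; exact h2 (by linarith)
  have hup : ∫⁻ x, g x ≤ (∫⁻ x, f x) + ENNReal.ofReal δ * (ν (ball 0 r)
        + ENNReal.ofReal (L * δ) * ν Set.univ * volume (ball (0 : EE (k + 1)) r)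
        + ENNReal.ofReal (1 / (b - a)) * volume (F ∩ (ball 0 r \ ball 0 (a - κ)))) := by
    simp only [hg]
    rw [lintegral_add_left hfm, lintegral_add_left hg1m, lintegral_indicator hG1m,
      lintegral_indicator hG2m, lintegral_const_mul _ hPm, lintegral_const_mul _ hum,
      mul_add (ENNReal.ofReal δ), ← mul_assoc (ENNReal.ofReal δ) (ENNReal.ofReal (1 / (b - a))),
      ← ENNReal.ofReal_mul hδ.le, mul_one_div]
    gcongr
  have hfinal := (ENNReal.add_le_add_iff_left hffin).1 (hlow.trans hup)
  exact (ENNReal.mul_le_mul_iff_right (by simpa using hδ) ofReal_ne_top).1 hfinal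

lemma tent {n : ℕ} {κ : ℝ} (hκ : 0 < κ) : ∃ c : ℝ, 0 < c ∧
    (∫⁻ z : EE n, ENNReal.ofReal (c * max 0 (κ - ‖z‖)) = 1) ∧
    c * κ * (κ ^ n * (volume (ball (0 : EE n) 1)).toReal) ≤ 2 ^ (n + 1) := by
  set I := ∫⁻ z : EE n, ENNReal.ofReal (max 0 (κ - ‖z‖)) with hI
  have hw := vball_pos (0 : EE n) one_pos
  set w := (volume (ball (0 : EE n) 1)).toReal with hwd
  have hvb : ∀ r : ℝ, 0 < r → volume (ball (0 : EE n) r) = ENNReal.ofReal (r ^ n * w) := by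
    intro r hr
    rw [vball_eq _ hr, ENNReal.ofReal_mul (by positivity), hwd, ENNReal.ofReal_toReal
      measure_ball_lt_top.ne]
  have hle : I ≤ ENNReal.ofReal κ * volume (ball (0 : EE n) κ) := by
    rw [← setLIntegral_const, ← lintegral_indicator measurableSet_ball]
    refine lintegral_mono fun z => ?_
    by_cases hz : z ∈ ball (0 : EE n) κ
    · rw [Set.indicator_of_mem hz]
      exact ENNReal.ofReal_le_ofReal (max_le hκ.le (by linarith [norm_nonneg z]))
    · rw [mem_ball_zero_iff, not_lt] at hz
      rw [max_eq_left (by linarith)]; simp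
  have hge : ENNReal.ofReal (κ / 2) * volume (ball (0 : EE n) (κ / 2)) ≤ I := by
    rw [← setLIntegral_const, ← lintegral_indicator measurableSet_ball]
    refine lintegral_mono fun z => ?_
    by_cases hz : z ∈ ball (0 : EE n) (κ / 2)
    · rw [Set.indicator_of_mem hz]
      rw [mem_ball_zero_iff] at hz
      exact ENNReal.ofReal_le_ofReal (le_max_of_le_right (by linarith))
    · rw [Set.indicator_of_notMem hz]; exact zero_le
  have hIf : I ≠ ⊤ := (hle.trans_lt (ENNReal.mul_lt_top ofReal_lt_top measure_ball_lt_top)).ne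
  rw [hvb _ (by positivity), ← ENNReal.ofReal_mul (by positivity),
    ENNReal.ofReal_le_iff_le_toReal hIf] at hge
  have hIp : 0 < I.toReal := lt_of_lt_of_le (by positivity) hge
  refine ⟨1 / I.toReal, by positivity, ?_, ?_⟩
  · have : ∀ z : EE n, ENNReal.ofReal (1 / I.toReal * max 0 (κ - ‖z‖))
        = ENNReal.ofReal (1 / I.toReal) * ENNReal.ofReal (max 0 (κ - ‖z‖)) := fun z =>
      ENNReal.ofReal_mul (by positivity)
    simp_rw [this]
    rw [lintegral_const_mul' _ _ ofReal_ne_top, ← hI, ← ENNReal.ofReal_toReal hIf,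
      ← ENNReal.ofReal_mul (by positivity), ENNReal.toReal_ofReal hIp.le,
      one_div_mul_cancel hIp.ne', ENNReal.ofReal_one]
  · have h2 : κ * (κ ^ n * w) = 2 ^ (n + 1) * (κ / 2 * ((κ / 2) ^ n * w)) := by
      rw [div_pow, pow_succ]; field_simp
    rw [mul_assoc, h2, one_div, inv_mul_le_iff₀ hIp, mul_comm (I.toReal)]
    gcongr

lemma u_large {k : ℕ} {F : Set (EE (k + 1))} (hF : MeasurableSet F) {σ : ℝ} (hs : 0 < σ)
    (hσ : σ < 1) :
    ∃ c > 0, ∀ R : ℝ, ∀ x ∈ GG F c R, ∀ κ ∈ Set.Ioo 0 R, ∀ C : ℝ, 0 < C →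
      (∫⁻ z : EE (k + 1), ENNReal.ofReal (C * max 0 (κ - ‖z‖)) = 1) →
      C * κ * (κ ^ (k + 1) * (volume (ball (0 : EE (k + 1)) 1)).toReal) ≤ 2 ^ (k + 1 + 1) →
      ENNReal.ofReal σ < ∫⁻ y in F, ENNReal.ofReal (C * max 0 (κ - ‖y - x‖)) := by
  have hw := vball_pos (0 : EE (k + 1)) one_pos
  set w := (volume (ball (0 : EE (k + 1)) 1)).toReal with hwd
  refine ⟨(1 - σ) / 2 * w / 2 ^ (k + 1 + 1), by
    have : 0 < 1 - σ := by linarith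
    positivity, ?_⟩
  intro R x hx κ hκ C hC hintg hbd
  obtain ⟨hκ0, hκR⟩ := hκ
  have h1 := hx κ ⟨hκ0, hκR⟩
  have htot : (∫⁻ y in F, ENNReal.ofReal (C * max 0 (κ - ‖y - x‖)))
      + ∫⁻ y in Fᶜ, ENNReal.ofReal (C * max 0 (κ - ‖y - x‖)) = 1 := by
    rw [lintegral_add_compl _ hF,
      lintegral_sub_right_eq_self (fun z => ENNReal.ofReal (C * max 0 (κ - ‖z‖))) x, hintg]
  have hout : ∫⁻ y in Fᶜ, ENNReal.ofReal (C * max 0 (κ - ‖y - x‖))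
      ≤ ENNReal.ofReal ((1 - σ) / 2) := by
    calc _ ≤ ∫⁻ y in Fᶜ, (ball x κ).indicator (fun _ => ENNReal.ofReal (C * κ)) y := by
          refine lintegral_mono fun y => ?_
          by_cases hy : y ∈ ball x κ
          · rw [Set.indicator_of_mem hy]
            apply ENNReal.ofReal_le_ofReal
            gcongr
            exact max_le hκ0.le (by linarith [norm_nonneg (y - x)])
          · rw [mem_ball_iff_norm, not_lt] at hy
            rw [max_eq_left (by linarith)]; simp
      _ = ENNReal.ofReal (C * κ) * volume (Fᶜ ∩ ball x κ) := by
          rw [setLIntegral_indicator measurableSet_ball, setLIntegral_const, Set.inter_comm]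
      _ ≤ ENNReal.ofReal (C * κ) * _ := mul_le_mul_right h1 _
      _ ≤ _ := by
          rw [← ENNReal.ofReal_mul (by positivity)]
          apply ENNReal.ofReal_le_ofReal
          have h2 : 0 ≤ (1 - σ) / 2 / 2 ^ (k + 1 + 1) := by
            have : 0 < 1 - σ := by linarith
            positivity
          have h3 := mul_le_mul_of_nonneg_left hbd h2
          calc _ = (1 - σ) / 2 / 2 ^ (k + 1 + 1) * (C * κ * (κ ^ (k + 1) * w)) := by ring
            _ ≤ _ := h3
            _ = _ := by field_simp
  by_contra hcon
  rw [not_lt] at hcon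
  have h5 := add_le_add hcon hout
  rw [htot] at h5
  rw [← ENNReal.ofReal_add hs.le (by linarith), ← ENNReal.ofReal_one,
      ENNReal.ofReal_le_ofReal_iff (by linarith)] at h5
  linarith

lemma iso2 {k : ℕ} {F : Set (EE (k + 1))} (hF : MeasurableSet F)
    (hN : (μHE[k] : Measure _) (essBoundary F) ≠ ⊤) {a' a b r σ v w : ℝ} (ha : a' < a)
    (hab : a < b) (hbr : b < r)
    (hw : 0 < w) (hwv : volume (ball (0 : EE (k + 1)) 1) = ENNReal.ofReal w) (hσ : 0 < σ)
    (hσ1 : σ < 1) (hv : 0 < v)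
    (hvol : ENNReal.ofReal v < volume (F ∩ ball 0 a)) :
    ENNReal.ofReal (σ * (((k + 1 : ℕ) : ℝ) * w ^ (1 / ((k + 1 : ℕ) : ℝ))
      * (v ^ (1 / ((k + 1 : ℕ) : ℝ))) ^ (k + 1 - 1))) ≤
      (Measure.restrict μHE[k] (essBoundary F)) (ball 0 r)
        + ENNReal.ofReal (1 / (b - a)) * volume (F ∩ (ball 0 r \ ball 0 a')) := by
  obtain ⟨c, hc, hu⟩ := u_large hF hσ hσ1
  set T : ℕ → Set (EE (k + 1)) := fun j => GG F c (1 / ((j : ℝ) + 1)) ∩ ball 0 a with hT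
  have hTm : Monotone T := by
    intro i j hij
    refine Set.inter_subset_inter_left _ (GG_mono ?_)
    gcongr
  have hTlim := tendsto_measure_iUnion_atTop (μ := (volume : Measure (EE (k + 1)))) hTm
  have hTv : ENNReal.ofReal v < volume (⋃ j, T j) := by
    refine hvol.trans_le (measure_mono_ae ?_)
    filter_upwards [ae_dens hF] with x hx hxF
    obtain ⟨R, hR, hG⟩ := GG_of_dens hF (hx.1 hxF.1) hc
    obtain ⟨j, hj⟩ := exists_nat_one_div_lt hR
    exact Set.mem_iUnion.2 ⟨j, GG_mono hj.le hG, hxF.2⟩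
  obtain ⟨j, hj⟩ := ((hTlim.eventually_const_lt hTv)).exists
  have hjp : 0 < 1 / ((j : ℝ) + 1) := by positivity
  obtain ⟨κ, hκ0, hκ⟩ : ∃ κ, 0 < κ ∧ κ < min (1 / ((j : ℝ) + 1)) (min (a - a') ((r - b) / 2)) := by
    apply exists_between
    refine lt_min hjp (lt_min (by linarith) (by linarith))
  rw [lt_min_iff, lt_min_iff] at hκ
  obtain ⟨hκ1, hκ2, hκ3⟩ := hκ
  obtain ⟨C, hC, hintg, hbd⟩ := tent (n := k + 1) hκ0
  set ν : Measure (EE (k + 1)) := Measure.restrict μHE[k] (essBoundary F) with hν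
  have hMf : ν Set.univ ≠ ⊤ := by rw [hν, Measure.restrict_apply_univ]; exact hN
  have key : ∀ δ ∈ Set.Ioo 0 ((r - b) / 2), ENNReal.ofReal (σ * (((k + 1 : ℕ) : ℝ) *
      w ^ (1 / ((k + 1 : ℕ) : ℝ)) * (v ^ (1 / ((k + 1 : ℕ) : ℝ))) ^ (k + 1 - 1))) ≤
      ν (ball 0 r) + ENNReal.ofReal (C * δ) * ν Set.univ * volume (ball (0 : EE (k + 1)) r)
        + ENNReal.ofReal (1 / (b - a)) * volume (F ∩ (ball 0 r \ ball 0 (a - κ))) := by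
    intro δ hδ
    refine iso1 hF hN (ρ := fun z => C * max 0 (κ - ‖z‖)) (by fun_prop) hC.le ?_ hintg (κ := κ) ?_
      hab hδ.1 (by linarith [hδ.2]) hκ0 hw hwv hσ hv ?_
    · intro x y
      rw [← mul_add]
      gcongr
      refine max_le (by positivity) ?_
      have := norm_sub_norm_le y x
      rw [← dist_eq_norm, dist_comm] at this
      have := le_max_right 0 (κ - ‖y‖)
      linarith
    · intro z hz
      rw [max_eq_left (by linarith), mul_zero]
    · refine hj.le.trans (measure_mono ?_)
      rintro x ⟨hx1, hx2⟩
      rw [mem_ball_zero_iff] at hx2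
      exact ⟨hx2, hu _ x hx1 κ ⟨hκ0, hκ1⟩ C hC hintg hbd⟩
  have hlim : Tendsto (fun δ : ℝ => ν (ball 0 r) + ENNReal.ofReal (C * δ) * ν Set.univ
        * volume (ball (0 : EE (k + 1)) r)
        + ENNReal.ofReal (1 / (b - a)) * volume (F ∩ (ball 0 r \ ball 0 (a - κ))))
      (nhdsWithin 0 (Set.Ioi 0)) (nhds (ν (ball 0 r) + ENNReal.ofReal (C * 0) * ν Set.univ
        * volume (ball (0 : EE (k + 1)) r)
        + ENNReal.ofReal (1 / (b - a)) * volume (F ∩ (ball 0 r \ ball 0 (a - κ))))) := by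
    refine Tendsto.add_const _ (Tendsto.const_add _ ?_)
    refine ENNReal.Tendsto.mul_const (ENNReal.Tendsto.mul_const ?_ (Or.inr hMf))
      (Or.inr measure_ball_lt_top.ne)
    have : Continuous (fun d : ℝ => ENNReal.ofReal (C * d)) :=
      ENNReal.continuous_ofReal.comp (by fun_prop)
    exact (this.tendsto 0).mono_left nhdsWithin_le_nhds
  have hfin := ge_of_tendsto hlim (by
    filter_upwards [Ioo_mem_nhdsGT (show (0 : ℝ) < (r - b) / 2 by linarith)] with δ hδ
      using key δ hδ)
  simp only [mul_zero, ENNReal.ofReal_zero, zero_mul, add_zero] at hfin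
  refine hfin.trans ?_
  gcongr
  linarith

/-- volume of `F` in the ball of radius `r` -/
def mR {n : ℕ} (F : Set (EE n)) (r : ℝ) : ℝ := (volume (F ∩ ball 0 r)).toReal

lemma mR_fin {n : ℕ} (F : Set (EE n)) (r : ℝ) : volume (F ∩ ball 0 r) ≠ ⊤ :=
  ((measure_mono Set.inter_subset_right).trans_lt measure_ball_lt_top).ne

lemma mR_mono {n : ℕ} (F : Set (EE n)) : Monotone (mR F) := fun _ _ h =>
  ENNReal.toReal_mono (mR_fin F _) (measure_mono
    (Set.inter_subset_inter_right _ (ball_subset_ball h)))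

lemma mR_diff {n : ℕ} (F : Set (EE n)) {a r : ℝ} (h : a ≤ r) :
    volume (F ∩ (ball 0 r \ ball 0 a)) = ENNReal.ofReal (mR F r - mR F a) := by
  have h1 : volume (F ∩ ball 0 r) = volume (F ∩ ball 0 a) + volume (F ∩ (ball 0 r \ ball 0 a)) := by
    rw [← measure_inter_add_sdiff (F ∩ ball 0 r) (measurableSet_ball (x := (0 : EE n)) (ε := a)),
      Set.inter_assoc, Set.inter_eq_right.2 (ball_subset_ball h), Set.inter_diff_assoc]
  rw [mR, mR, ENNReal.ofReal_sub _ toReal_nonneg, ENNReal.ofReal_toReal (mR_fin F r),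
    ENNReal.ofReal_toReal (mR_fin F a), h1, ENNReal.add_sub_cancel_left (mR_fin F a)]

/-- the isoperimetric function -/
def isoK (k : ℕ) (w v : ℝ) : ℝ := ((k + 1 : ℕ) : ℝ) * w ^ (1 / ((k + 1 : ℕ) : ℝ))
      * (v ^ (1 / ((k + 1 : ℕ) : ℝ))) ^ (k + 1 - 1)

lemma isoK_cont (k : ℕ) (w : ℝ) : Continuous (isoK k w) := by
  unfold isoK
  have : Continuous fun v : ℝ => v ^ (1 / ((k + 1 : ℕ) : ℝ)) :=
    Real.continuous_rpow_const (by positivity)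
  fun_prop

lemma iso3 {k : ℕ} {F : Set (EE (k + 1))} (hF : MeasurableSet F)
    (hN : (μHE[k] : Measure _) (essBoundary F) ≠ ⊤) {a' a b r w : ℝ} (ha : a' < a)
    (hab : a < b) (hbr : b < r)
    (hw : 0 < w) (hwv : volume (ball (0 : EE (k + 1)) 1) = ENNReal.ofReal w)
    (hpos : 0 < mR F a) :
    isoK k w (mR F a) ≤ ((Measure.restrict μHE[k] (essBoundary F)) (ball 0 r)).toReal
        + 1 / (b - a) * (mR F r - mR F a') := by
  set ν : Measure (EE (k + 1)) := Measure.restrict μHE[k] (essBoundary F) with hν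
  have hMf : ν Set.univ ≠ ⊤ := by rw [hν, Measure.restrict_apply_univ]; exact hN
  have hνf : ν (ball 0 r) ≠ ⊤ := ((measure_mono (Set.subset_univ _)).trans_lt
    (lt_top_iff_ne_top.2 hMf)).ne
  have hba : 0 < 1 / (b - a) := by
    have : 0 < b - a := by linarith
    positivity
  have hm : 0 ≤ mR F r - mR F a' := sub_nonneg.2 (mR_mono F (by linarith))
  have key : ∀ θ ∈ Set.Ioo (0 : ℝ) 1, (1 - θ) * isoK k w ((1 - θ) * mR F a) ≤ (ν (ball 0 r)).toReal
        + 1 / (b - a) * (mR F r - mR F a') := by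
    intro θ hθ
    have h1 : 0 < 1 - θ := by linarith [hθ.2]
    have hlt : (1 - θ) * mR F a < mR F a := by nlinarith [hθ.1]
    have := iso2 hF hN ha hab hbr hw hwv h1 (by linarith [hθ.1])
      (show 0 < (1 - θ) * mR F a by positivity) (by
        rw [← ENNReal.ofReal_toReal (mR_fin F a)]
        exact (ENNReal.ofReal_lt_ofReal_iff hpos).2 hlt)
    rw [mR_diff F (by linarith), ← ENNReal.ofReal_mul hba.le, ← hν, ← ENNReal.ofReal_toReal hνf,
      ← ENNReal.ofReal_add toReal_nonneg (by positivity), ENNReal.ofReal_le_ofReal_iff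
        (by positivity)] at this
    exact this
  have hlim : Tendsto (fun θ : ℝ => (1 - θ) * isoK k w ((1 - θ) * mR F a))
      (nhdsWithin 0 (Set.Ioi 0)) (nhds ((1 - 0) * isoK k w ((1 - 0) * mR F a))) := by
    have hc := isoK_cont k w
    have : Continuous (fun θ : ℝ => (1 - θ) * isoK k w ((1 - θ) * mR F a)) := by fun_prop
    exact (this.tendsto 0).mono_left nhdsWithin_le_nhds
  rw [sub_zero, one_mul, one_mul] at hlim
  refine le_of_tendsto hlim ?_
  filter_upwards [Ioo_mem_nhdsGT one_pos] with θ hθ using key θ hθ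

lemma iso4 {k : ℕ} {F : Set (EE (k + 1))} (hF : MeasurableSet F)
    (hN : (μHE[k] : Measure _) (essBoundary F) ≠ ⊤) {r w d : ℝ}
    (hw : 0 < w) (hwv : volume (ball (0 : EE (k + 1)) 1) = ENNReal.ofReal w)
    (hpos : 0 < mR F r) (hd : HasDerivAt (mR F) d r) :
    isoK k w (mR F r) ≤ ((Measure.restrict μHE[k] (essBoundary F)) (ball 0 r)).toReal + d := by
  have hcont : ContinuousAt (mR F) r := hd.continuousAt
  set q := ((Measure.restrict μHE[k] (essBoundary F)) (ball (0 : EE (k + 1)) r)).toReal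
  have hbase : Tendsto (fun h : ℝ => r - h - h ^ 2) (nhdsWithin 0 (Set.Ioi 0)) (nhds r) := by
    have : Continuous (fun h : ℝ => r - h - h ^ 2) := by fun_prop
    simpa using (this.tendsto 0).mono_left nhdsWithin_le_nhds
  have hbase2 : Tendsto (fun h : ℝ => r - h) (nhdsWithin 0 (Set.Ioi 0)) (nhds r) := by
    have : Continuous (fun h : ℝ => r - h) := by fun_prop
    simpa using (this.tendsto 0).mono_left nhdsWithin_le_nhds
  have hL : Tendsto (fun h : ℝ => isoK k w (mR F (r - h))) (nhdsWithin 0 (Set.Ioi 0))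
      (nhds (isoK k w (mR F r))) :=
    ((isoK_cont k w).tendsto _).comp (hcont.tendsto.comp hbase2)
  have hslope : Tendsto (fun h : ℝ => slope (mR F) r (r - h - h ^ 2)) (nhdsWithin 0 (Set.Ioi 0))
      (nhds d) := by
    refine (hasDerivAt_iff_tendsto_slope.1 hd).comp ?_
    refine tendsto_nhdsWithin_iff.2 ⟨hbase, ?_⟩
    filter_upwards [self_mem_nhdsWithin] with h hh
    have hh : 0 < h := hh
    have : 0 < h ^ 2 := by positivity
    exact ne_of_lt (by linarith)
  have hfac : Tendsto (fun h : ℝ => (1 + h) / (1 - h)) (nhdsWithin 0 (Set.Ioi 0)) (nhds 1) := by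
    have : ContinuousAt (fun h : ℝ => (1 + h) / (1 - h)) 0 := by
      apply ContinuousAt.div <;> first | fun_prop | norm_num
    simpa using this.tendsto.mono_left nhdsWithin_le_nhds
  have hR := (hfac.mul hslope).const_add q
  rw [one_mul] at hR
  refine le_of_tendsto_of_tendsto hL hR ?_
  have hev : ∀ᶠ h in nhdsWithin (0 : ℝ) (Set.Ioi 0), 0 < mR F (r - h) :=
    (hcont.tendsto.comp hbase2).eventually_const_lt hpos
  filter_upwards [hev, Ioo_mem_nhdsGT one_pos] with h hm hh
  obtain ⟨h0, h1⟩ := hh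
  have hsq : h ^ 2 < h := by nlinarith
  have hsq0 : 0 < h ^ 2 := by positivity
  have := iso3 hF hN (a' := r - h - h ^ 2) (a := r - h) (b := r - h ^ 2) (r := r) (by linarith)
    (by linarith) (by linarith) hw hwv hm
  refine this.trans (le_of_eq ?_)
  congr 1
  have e1 : r - h ^ 2 - (r - h) = h * (1 - h) := by ring
  have e2 : (r - h - h ^ 2) - r = - (h * (1 + h)) := by ring
  have hp1 : (1 - h) ≠ 0 := by linarith
  have hp2 : (1 + h) ≠ 0 := by linarith
  rw [slope_def_field, e1, e2]
  field_simp
  ring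

namespace Cyl
variable {k : ℕ} {e : EE (k + 1)}

lemma ht_eq (C : Cyl k e) (x : EE (k + 1)) : C.ht x = inner ℝ e x := by
  conv_rhs => rw [← C.J_ht_pr x, C.hJ, inner_add_right, C.orth, inner_smul_right,
    real_inner_self_eq_norm_sq, C.he]
  simp

lemma norm_sq' (C : Cyl k e) (x : EE (k + 1)) : ‖x‖ ^ 2 = C.ht x ^ 2 + ‖C.pr x‖ ^ 2 := by
  rw [← C.norm_sq, C.J_ht_pr]

/-- on a sphere intersected with a narrow cone the projection is almost isometric -/
lemma dist_cone (C : Cyl k e) {θ s : ℝ} (hθ : 0 ≤ θ) {x x' : EE (k + 1)}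
    (hx : 0 < C.ht x ∧ ‖C.pr x‖ ≤ θ * C.ht x) (hx' : 0 < C.ht x' ∧ ‖C.pr x'‖ ≤ θ * C.ht x')
    (hs : ‖x‖ = s) (hs' : ‖x'‖ = s) : dist x x' ≤ (1 + θ) * dist (C.pr x) (C.pr x') := by
  have h1 := C.norm_sq' x
  have h2 := C.norm_sq' x'
  rw [hs] at h1
  rw [hs'] at h2
  have h3 := C.dist_sq (C.ht x) (C.ht x') (C.pr x) (C.pr x')
  rw [C.J_ht_pr, C.J_ht_pr] at h3
  set t := C.ht x
  set t' := C.ht x'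
  set D := dist (C.pr x) (C.pr x') with hD
  have hD0 : 0 ≤ D := dist_nonneg
  have h4 : |‖C.pr x'‖ - ‖C.pr x‖| ≤ D := by
    rw [hD, dist_comm, dist_eq_norm]; exact abs_norm_sub_norm_le _ _
  have hpos : 0 < t + t' := add_pos hx.1 hx'.1
  have h5 : |t - t'| ≤ θ * D := by
    have e1 : (t - t') * (t + t') = (‖C.pr x'‖ - ‖C.pr x‖) * (‖C.pr x'‖ + ‖C.pr x‖) := by
      nlinarith
    have e2 : |t - t'| * (t + t') = |‖C.pr x'‖ - ‖C.pr x‖| * (‖C.pr x'‖ + ‖C.pr x‖) := by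
      have := congrArg abs e1
      rw [abs_mul, abs_mul, abs_of_pos hpos, abs_of_nonneg (a := ‖C.pr x'‖ + ‖C.pr x‖)
        (by positivity)] at this
      exact this
    have e3 : |t - t'| * (t + t') ≤ (θ * D) * (t + t') := by
      rw [e2]
      calc _ ≤ D * (θ * (t + t')) := by
            gcongr
            linarith [hx.2, hx'.2]
        _ = _ := by ring
    exact le_of_mul_le_mul_right e3 hpos
  have h6 : (t - t') ^ 2 ≤ (θ * D) ^ 2 := sq_le_sq' (by linarith [(abs_le.1 h5).1]) (abs_le.1 h5).2
  apply abs_le_of_sq_le_sq' _ (by positivity) |>.2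
  rw [h3]
  nlinarith [mul_nonneg hθ (sq_nonneg D)]

lemma cone_slice (C : Cyl k e) {θ : ℝ} (hθ : 0 ≤ θ) {W : Set (EE (k + 1))}
    (hWm : MeasurableSet W) (hW : ∀ x ∈ W, 0 < C.ht x ∧ ‖C.pr x‖ ≤ θ * C.ht x) :
    ∃ G : ℝ → ℝ≥0∞, Measurable G ∧
      (∀ s, (μHE[k] : Measure _) (W ∩ sphere 0 s) ≤ ENNReal.ofReal ((1 + θ) ^ k) * G s) ∧
      ∀ I : Set ℝ, MeasurableSet I → ∫⁻ s in I, G s ≤ volume (W ∩ {x | ‖x‖ ∈ I}) := by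
  set S : Set (ℝ × EE k) := {p | 0 ≤ p.1 ∧ ‖p.2‖ ≤ p.1 ∧
    C.J (Real.sqrt (p.1 ^ 2 - ‖p.2‖ ^ 2), p.2) ∈ W} with hS
  have hSm : MeasurableSet S := by
    refine MeasurableSet.inter (measurableSet_le measurable_const measurable_fst)
      (MeasurableSet.inter (measurableSet_le measurable_snd.norm measurable_fst) ?_)
    have : Measurable fun p : ℝ × EE k => C.J (Real.sqrt (p.1 ^ 2 - ‖p.2‖ ^ 2), p.2) := by
      refine C.J.measurable.comp ?_
      fun_prop
    exact this hWm
  refine ⟨fun s => volume {y | (s, y) ∈ S}, measurable_measure_prodMk_left hSm, ?_, ?_⟩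
  · intro s
    set f : EE k → EE (k + 1) := fun y => C.J (Real.sqrt (s ^ 2 - ‖y‖ ^ 2), y) with hf
    have hfx : ∀ x ∈ W ∩ sphere 0 s, f (C.pr x) = x := by
      rintro x ⟨hx, hxs⟩
      rw [mem_sphere_zero_iff_norm] at hxs
      have h1 := C.norm_sq' x
      rw [hxs] at h1
      simp only [hf]
      rw [show s ^ 2 - ‖C.pr x‖ ^ 2 = C.ht x ^ 2 by linarith, Real.sqrt_sq (hW x hx).1.le, C.J_ht_pr]
    have hlip : LipschitzOnWith (Real.toNNReal (1 + θ)) f (C.pr '' (W ∩ sphere 0 s)) := by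
      apply LipschitzOnWith.of_dist_le_mul
      rintro _ ⟨x, hx, rfl⟩ _ ⟨x', hx', rfl⟩
      rw [hfx x hx, hfx x' hx', Real.coe_toNNReal _ (by positivity)]
      exact C.dist_cone hθ (hW x hx.1) (hW x' hx'.1) (mem_sphere_zero_iff_norm.1 hx.2)
        (mem_sphere_zero_iff_norm.1 hx'.2)
    have himg : W ∩ sphere 0 s ⊆ f '' (C.pr '' (W ∩ sphere 0 s)) := by
      intro x hx
      exact ⟨C.pr x, ⟨x, hx, rfl⟩, hfx x hx⟩
    refine (measure_mono himg).trans ((muHE_image_le hlip k).trans ?_)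
    rw [EuclideanSpace.euclideanHausdorffMeasure_eq_volume, ENNReal.ofReal_pow (by positivity)]
    gcongr
    · exact le_rfl
    change volume (C.pr '' (W ∩ sphere 0 s)) ≤ volume {y | (s, y) ∈ S}
    refine measure_mono ?_
    rintro _ ⟨x, hx, rfl⟩
    have hxs := mem_sphere_zero_iff_norm.1 hx.2
    have h0 : 0 ≤ s := by rw [← hxs]; exact norm_nonneg _
    refine ⟨h0, ?_, ?_⟩
    · have h1 := C.norm_sq' x
      rw [hxs] at h1
      exact abs_le_of_sq_le_sq' (by nlinarith [sq_nonneg (C.ht x)]) h0 |>.2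
    · have := hfx x hx
      simp only [hf] at this
      change C.J _ ∈ W
      rw [this]; exact hx.1
  · intro I hI
    have hWI : MeasurableSet (W ∩ {x | ‖x‖ ∈ I}) := hWm.inter (measurable_norm hI)
    have e1 : ∫⁻ s in I, volume {y | (s, y) ∈ S}
        = ∫⁻ y, volume {s : ℝ | s ∈ I ∧ (s, y) ∈ S} := by
      have hm : MeasurableSet (S ∩ (Prod.fst ⁻¹' I)) := hSm.inter (measurable_fst hI)
      have a1 := Measure.prod_apply (μ := (volume : Measure ℝ)) (ν := (volume : Measure (EE k))) hm
      have a2 := Measure.prod_apply_symm (μ := (volume : Measure ℝ))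
        (ν := (volume : Measure (EE k))) hm
      rw [a1] at a2
      rw [← lintegral_indicator hI]
      have b1 : (I.indicator fun s => volume {y | (s, y) ∈ S})
          = fun s => volume (Prod.mk s ⁻¹' (S ∩ Prod.fst ⁻¹' I)) := by
        funext s
        by_cases hs : s ∈ I
        · rw [Set.indicator_of_mem hs]
          congr 1
          ext y
          exact ⟨fun h => ⟨h, hs⟩, fun h => h.1⟩
        · rw [Set.indicator_of_notMem hs]
          have : Prod.mk s ⁻¹' (S ∩ Prod.fst ⁻¹' I) = (∅ : Set (EE k)) := by
            ext y
            exact ⟨fun h => hs h.2, fun h => h.elim⟩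
          rw [this, measure_empty]
      have b2 : (fun y => volume {s : ℝ | s ∈ I ∧ (s, y) ∈ S})
          = fun y => volume ((fun s : ℝ => (s, y)) ⁻¹' (S ∩ Prod.fst ⁻¹' I)) := by
        funext y
        congr 1
        ext s
        exact ⟨fun h => ⟨h.2, h.1⟩, fun h => ⟨h.2, h.1⟩⟩
      rw [b1, b2]
      exact a2
    rw [e1, C.vol_eq hWI]
    refine lintegral_mono fun y => ?_
    set φ : ℝ → ℝ := fun t => Real.sqrt (t ^ 2 + ‖y‖ ^ 2) with hφ
    have hlip : LipschitzWith 1 φ := by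
      refine LipschitzWith.of_dist_le_mul fun t t' => ?_
      rw [NNReal.coe_one, one_mul, Real.dist_eq, Real.dist_eq]
      have n1 : ∀ t, φ t = ‖C.J (t, y)‖ := by
        intro t
        simp only [hφ]
        rw [← C.norm_sq, Real.sqrt_sq (norm_nonneg _)]
      rw [n1, n1]
      refine (abs_norm_sub_norm_le _ _).trans ?_
      rw [C.J_sub, sub_self]
      apply abs_le_of_sq_le_sq' _ (abs_nonneg _) |>.2
      rw [C.norm_sq]; simp
    have hsub : {s : ℝ | s ∈ I ∧ (s, y) ∈ S} ⊆
        φ '' {t | C.J (t, y) ∈ W ∩ {x | ‖x‖ ∈ I}} := by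
      rintro s ⟨hsI, hs0, hsy, hsW⟩
      simp only at hs0 hsy hsW
      have hnn : 0 ≤ s ^ 2 - ‖y‖ ^ 2 := by nlinarith [norm_nonneg y]
      have hnorm : ‖C.J (Real.sqrt (s ^ 2 - ‖y‖ ^ 2), y)‖ = s := by
        have := C.norm_sq (Real.sqrt (s ^ 2 - ‖y‖ ^ 2)) y
        rw [Real.sq_sqrt hnn, sub_add_cancel] at this
        exact (pow_left_inj₀ (norm_nonneg _) hs0 two_ne_zero).1 this
      refine ⟨Real.sqrt (s ^ 2 - ‖y‖ ^ 2), ⟨hsW, ?_⟩, ?_⟩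
      · change ‖_‖ ∈ I
        rw [hnorm]; exact hsI
      · simp only [hφ]
        rw [Real.sq_sqrt hnn, sub_add_cancel, Real.sqrt_sq hs0]
    refine (measure_mono hsub).trans ?_
    have := hlip.hausdorffMeasure_image_le (d := 1) zero_le_one
      {t | C.J (t, y) ∈ W ∩ {x | ‖x‖ ∈ I}}
    rw [hausdorffMeasure_real] at this
    simpa using this

end Cyl

/-- open narrow cone with axis `e` -/
def coneQ {k : ℕ} (θ : ℝ) (e : EE (k + 1)) : Set (EE (k + 1)) :=
  {x | 0 < (inner ℝ e x : ℝ) ∧ ‖x‖ ^ 2 < (1 + θ ^ 2) * (inner ℝ e x : ℝ) ^ 2}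

lemma coneQ_open {k : ℕ} (θ : ℝ) (e : EE (k + 1)) : IsOpen (coneQ θ e) := by
  have h : Continuous fun x : EE (k + 1) => (inner ℝ e x : ℝ) := by fun_prop
  exact IsOpen.inter (isOpen_lt continuous_const h)
    (isOpen_lt (continuous_norm.pow 2) (continuous_const.mul (h.pow 2)))

lemma coneQ_cover {k : ℕ} {θ : ℝ} (hθ : 0 < θ) {x : EE (k + 1)} (hx : x ≠ 0) :
    x ∈ coneQ θ (‖x‖⁻¹ • x) := by
  have h : 0 < ‖x‖ := norm_pos_iff.2 hx
  have e1 : (inner ℝ (‖x‖⁻¹ • x) x : ℝ) = ‖x‖ := by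
    rw [real_inner_smul_left, real_inner_self_eq_norm_sq]
    field_simp
  change 0 < (inner ℝ (‖x‖⁻¹ • x) x : ℝ) ∧ _ < _
  rw [e1]
  refine ⟨h, ?_⟩
  nlinarith [mul_pos (pow_pos hθ 2) (pow_pos h 2)]

lemma sphere_slice_theta {k : ℕ} {θ : ℝ} (hθ : 0 < θ) {A : Set (EE (k + 1))}
    (hA : MeasurableSet A) :
    ∃ g : ℝ → ℝ≥0∞, Measurable g ∧
      (∀ s, 0 < s → (μHE[k] : Measure _) (A ∩ sphere 0 s) ≤ g s) ∧
      ∀ I : Set ℝ, MeasurableSet I →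
        ∫⁻ s in I, g s ≤ ENNReal.ofReal ((1 + θ) ^ k) * volume (A ∩ {x | ‖x‖ ∈ I}) := by
  obtain ⟨T, hT, hTU⟩ := TopologicalSpace.isOpen_iUnion_countable
    (fun e : {e : EE (k + 1) // ‖e‖ = 1} => coneQ θ e.1) (fun e => coneQ_open θ e.1)
  have hcov : ∀ x : EE (k + 1), x ≠ 0 → ∃ i ∈ T, x ∈ coneQ θ i.1 := by
    intro x hx
    have : x ∈ ⋃ i ∈ T, coneQ θ i.1 := by
      rw [hTU]
      refine Set.mem_iUnion.2 ⟨⟨‖x‖⁻¹ • x, norm_smul_inv_norm hx⟩, coneQ_cover hθ hx⟩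
    simpa using this
  have hTn : T.Nonempty := by
    obtain ⟨x, hx⟩ := exists_ne (0 : EE (k + 1))
    obtain ⟨i, hi, -⟩ := hcov x hx
    exact ⟨i, hi⟩
  obtain ⟨f, hf⟩ := hT.exists_eq_range hTn
  set Q : ℕ → Set (EE (k + 1)) := disjointed (fun i => coneQ θ (f i).1) with hQ
  have hQm : ∀ i, MeasurableSet (Q i) := fun i =>
    MeasurableSet.disjointed (fun i => (coneQ_open θ (f i).1).measurableSet) i
  have hQsub : ∀ i, Q i ⊆ coneQ θ (f i).1 := fun i => disjointed_subset _ i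
  have hQd : Pairwise (Function.onFun Disjoint Q) := disjoint_disjointed _
  have hQU : ∀ x : EE (k + 1), x ≠ 0 → ∃ i, x ∈ Q i := by
    intro x hx
    obtain ⟨e, he, hxe⟩ := hcov x hx
    rw [hf] at he
    obtain ⟨i, rfl⟩ := he
    have : x ∈ ⋃ i, Q i := by
      rw [hQ, iUnion_disjointed]
      exact Set.mem_iUnion.2 ⟨i, hxe⟩
    simpa using this
  have key : ∀ i, ∃ G : ℝ → ℝ≥0∞, Measurable G ∧
      (∀ s, (μHE[k] : Measure _) ((A ∩ Q i) ∩ sphere 0 s) ≤ ENNReal.ofReal ((1 + θ) ^ k) * G s) ∧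
      ∀ I : Set ℝ, MeasurableSet I → ∫⁻ s in I, G s ≤ volume ((A ∩ Q i) ∩ {x | ‖x‖ ∈ I}) := by
    intro i
    obtain ⟨C⟩ := exists_cyl k (f i).1 (f i).2
    refine C.cone_slice hθ.le (hA.inter (hQm i)) ?_
    rintro x ⟨-, hx⟩
    obtain ⟨h1, h2⟩ := hQsub i hx
    rw [← C.ht_eq] at h1 h2
    refine ⟨h1, ?_⟩
    rw [C.norm_sq'] at h2
    refine (abs_le_of_sq_le_sq' ?_ (by positivity)).2
    nlinarith
  choose G hG1 hG2 hG3 using key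
  refine ⟨fun s => ∑' i, ENNReal.ofReal ((1 + θ) ^ k) * G i s,
    Measurable.ennreal_tsum fun i => (hG1 i).const_mul _, ?_, ?_⟩
  · intro s hs
    have hsub : A ∩ sphere (0 : EE (k + 1)) s ⊆ ⋃ i, ((A ∩ Q i) ∩ sphere 0 s) := by
      rintro x ⟨hx, hxs⟩
      obtain ⟨i, hi⟩ := hQU x (by
        rintro rfl
        rw [mem_sphere_zero_iff_norm, norm_zero] at hxs
        exact hs.ne hxs)
      exact Set.mem_iUnion.2 ⟨i, ⟨hx, hi⟩, hxs⟩
    exact (measure_mono hsub).trans ((measure_iUnion_le _).trans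
      (ENNReal.tsum_le_tsum fun i => hG2 i s))
  · intro I hI
    rw [lintegral_tsum fun i => ((hG1 i).const_mul _).aemeasurable]
    have : ∀ i, ∫⁻ s in I, ENNReal.ofReal ((1 + θ) ^ k) * G i s
        ≤ ENNReal.ofReal ((1 + θ) ^ k) * volume ((A ∩ {x | ‖x‖ ∈ I}) ∩ Q i) := by
      intro i
      rw [lintegral_const_mul _ (hG1 i)]
      have h3 := hG3 i I hI
      rw [Set.inter_right_comm] at h3
      gcongr
    refine (ENNReal.tsum_le_tsum this).trans ?_
    rw [ENNReal.tsum_mul_left, ← measure_iUnion]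
    · gcongr
      exact Set.iUnion_subset fun i => Set.inter_subset_left
    · intro i j hij
      exact (hQd hij).mono Set.inter_subset_right Set.inter_subset_right
    · exact fun i => (hA.inter (measurable_norm hI)).inter (hQm i)

lemma sphere_slice {k : ℕ} {A : Set (EE (k + 1))} (hA : MeasurableSet A) :
    ∃ g : ℝ → ℝ≥0∞, Measurable g ∧
      (∀ s, 0 < s → (μHE[k] : Measure _) (A ∩ sphere 0 s) ≤ g s) ∧
      ∀ I : Set ℝ, MeasurableSet I → ∫⁻ s in I, g s ≤ volume (A ∩ {x | ‖x‖ ∈ I}) := by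
  choose g h1 h2 h3 using fun j : ℕ =>
    sphere_slice_theta (k := k) (θ := 1 / ((j : ℝ) + 1)) (by positivity) hA
  refine ⟨fun s => liminf (fun j => g j s) atTop, Measurable.liminf h1, ?_, ?_⟩
  · intro s hs
    exact le_liminf_of_le (by isBoundedDefault) (Eventually.of_forall fun j => h2 j s hs)
  · intro I hI
    refine (lintegral_liminf_le h1).trans ?_
    refine (liminf_le_liminf (Eventually.of_forall fun j => h3 j I hI)).trans ?_
    apply le_of_eq
    by_cases hz : volume (A ∩ {x | ‖x‖ ∈ I}) = ⊤
    · rw [hz]; exact le_antisymm le_top (le_liminf_of_le (by isBoundedDefault)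
        (Eventually.of_forall fun j => by
          rw [ENNReal.mul_top]
          simp only [ne_eq, ENNReal.ofReal_eq_zero, not_le]; positivity))
    · apply Tendsto.liminf_eq
      conv_rhs => rw [← one_mul (volume (A ∩ {x | ‖x‖ ∈ I}))]
      refine ENNReal.Tendsto.mul_const ?_ (Or.inr hz)
      rw [← ENNReal.ofReal_one]
      refine ENNReal.tendsto_ofReal ?_
      have := ((tendsto_one_div_add_atTop_nhds_zero_nat (𝕜 := ℝ)).const_add 1).pow k
      simpa using this

/-- the set of density points is a.e. equal to the set -/
lemma densPts_ae {k : ℕ} {F : Set (EE (k + 1))} (hF : MeasurableSet F) :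
    densityOnePoints F =ᵐ[volume] F := by
  filter_upwards [ae_dens hF] with x hx
  apply propext
  constructor
  · intro h
    by_contra h'
    exact dens_unique (hx.2 h') h
  · exact fun h => hx.1 h

lemma norm_Ico {n : ℕ} (a b : ℝ) : {x : EE n | ‖x‖ ∈ Set.Ico a b} = ball 0 b \ ball 0 a := by
  ext x
  simp [and_comm]

lemma dens_slice {k : ℕ} {F : Set (EE (k + 1))} (hF : MeasurableSet F) :
    ∃ g : ℝ → ℝ≥0∞, Measurable g ∧
      (∀ s, 0 < s → (μHE[k] : Measure _) (densityOnePoints F ∩ sphere 0 s) ≤ g s) ∧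
      ∀ I : Set ℝ, MeasurableSet I → ∫⁻ s in I, g s ≤ volume (F ∩ {x | ‖x‖ ∈ I}) := by
  have hnull : NullMeasurableSet (densityOnePoints F) volume :=
    hF.nullMeasurableSet.congr (densPts_ae hF).symm
  obtain ⟨g, h1, h2, h3⟩ := sphere_slice
    (measurableSet_toMeasurable (volume : Measure (EE (k + 1))) (densityOnePoints F))
  refine ⟨g, h1, fun s hs => (measure_mono (Set.inter_subset_inter_left _
    (subset_toMeasurable _ _))).trans (h2 s hs), fun I hI => (h3 I hI).trans ?_⟩
  apply le_of_eq
  apply measure_congr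
  exact (hnull.toMeasurable_ae_eq.trans (densPts_ae hF)).inter (ae_eq_refl _)

lemma slice_deriv {n : ℕ} {F : Set (EE n)} {g : ℝ → ℝ≥0∞} (hg : Measurable g)
    (h3 : ∀ I : Set ℝ, MeasurableSet I → ∫⁻ s in I, g s ≤ volume (F ∩ {x : EE n | ‖x‖ ∈ I})) :
    ∀ᵐ r, g r ≤ ENNReal.ofReal (deriv (mR F) r) := by
  have hfin : ∀ R : ℝ, ∫⁻ s in Set.Icc (-R) R, g s ≠ ⊤ := by
    intro R
    refine ((h3 _ measurableSet_Icc).trans_lt ?_).ne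
    refine (measure_mono (t := closedBall (0 : EE n) R) ?_).trans_lt measure_closedBall_lt_top
    rintro x ⟨-, hx⟩
    rw [mem_closedBall_zero_iff]
    exact hx.2
  have hlt : ∀ᵐ r, g r < ⊤ := by
    have : ∀ N : ℕ, ∀ᵐ r, r ∈ Set.Icc (-(N : ℝ)) N → g r < ⊤ := by
      intro N
      rw [← ae_restrict_iff' measurableSet_Icc]
      exact ae_lt_top hg (hfin N)
    filter_upwards [ae_all_iff.2 this] with r hr
    obtain ⟨N, hN⟩ := exists_nat_ge |r|
    exact hr N (abs_le.1 hN)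
  set f : ℝ → ℝ := fun t => (g t).toReal with hf
  have hloc : LocallyIntegrable f := by
    rw [locallyIntegrable_iff]
    intro K hK
    obtain ⟨R, hR⟩ := hK.isBounded.subset_closedBall 0
    rw [Real.closedBall_eq_Icc, zero_sub, zero_add] at hR
    exact IntegrableOn.mono_set
      (integrable_toReal_of_lintegral_ne_top hg.aemeasurable (hfin R)) hR
  have hintg : ∀ a b, IntervalIntegrable f volume a b := fun a b =>
    (hloc.integrableOn_isCompact isCompact_uIcc).intervalIntegrable
  have hD : Monotone fun y => mR F y - ∫ t in (0 : ℝ)..y, f t := by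
    intro a b hab
    have e1 : (∫ t in (0 : ℝ)..b, f t) - ∫ t in (0 : ℝ)..a, f t = ∫ t in a..b, f t :=
      intervalIntegral.integral_interval_sub_left (hintg _ _) (hintg _ _)
    have e2 : ∫ t in a..b, f t ≤ mR F b - mR F a := by
      rw [intervalIntegral.integral_of_le hab,
        integral_toReal hg.aemeasurable (ae_restrict_of_ae hlt)]
      refine ENNReal.toReal_le_of_le_ofReal (sub_nonneg.2 (mR_mono F hab)) ?_
      rw [← Measure.restrict_congr_set Ico_ae_eq_Ioc, ← mR_diff F hab, ← norm_Ico]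
      exact h3 _ measurableSet_Ico
    change _ - _ ≤ _ - _
    linarith
  filter_upwards [hlt, LocallyIntegrable.ae_hasDerivAt_integral hloc, (mR_mono F).ae_differentiableAt]
    with r hr1 hr2 hr3
  have hd := hr3.hasDerivAt.sub (hr2 0)
  have h0 : 0 ≤ deriv (fun y => mR F y - ∫ t in (0 : ℝ)..y, f t) r := hD.deriv_nonneg
  have h0' : deriv (fun y => mR F y - ∫ t in (0 : ℝ)..y, f t) r = deriv (mR F) r - f r :=
    HasDerivAt.deriv hd
  rw [h0'] at h0
  rw [← ENNReal.ofReal_toReal hr1.ne]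
  exact ENNReal.ofReal_le_ofReal (by simp only [hf] at h0; linarith)

lemma mR_pos_of {k : ℕ} {F : Set (EE (k + 1))} {r r' : ℝ} (hr : r' < r)
    (h : (densityOnePoints F ∩ sphere 0 r').Nonempty) : 0 < mR F r := by
  refine lt_of_le_of_ne ENNReal.toReal_nonneg fun h0 => ?_
  have hz : volume (F ∩ ball 0 r) = 0 := by
    rcases (ENNReal.toReal_eq_zero_iff _).1 h0.symm with h | h
    · exact h
    · exact absurd h (mR_fin F r)
  obtain ⟨x, hx1, hx2⟩ := h
  refine dens_unique (F := F) (x := x) ?_ hx1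
  unfold HasDensity
  refine tendsto_const_nhds.congr' ?_
  have : Set.Ioo 0 (r - r') ∈ nhdsWithin (0 : ℝ) (Set.Ioi 0) :=
    Ioo_mem_nhdsGT (sub_pos.2 hr)
  filter_upwards [this] with ρ hρ
  have hsub : F ∩ ball x ρ ⊆ F ∩ ball 0 r := by
    refine Set.inter_subset_inter_right _ (ball_subset_ball' ?_)
    rw [mem_sphere] at hx2
    rw [hx2]
    linarith [hρ.2]
  rw [measure_mono_null hsub hz]
  simp

lemma core {k : ℕ} {F : Set (EE (k + 1))} (hF : MeasurableSet F)
    (hN : (μHE[k] : Measure _) (essBoundary F) ≠ ⊤) {a b w : ℝ}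
    (hw : 0 < w) (hwv : volume (ball (0 : EE (k + 1)) 1) = ENNReal.ofReal w)
    (ha : 0 ≤ a) (hab : a < b)
    (hlt : ∀ r ∈ Set.Ioo a b, (μHE[k] : Measure _) (essBoundary F ∩ ball 0 r)
      < (μHE[k] : Measure _) (densityOnePoints F ∩ sphere 0 r)) :
    w * ((b - a) / 2) ^ (k + 1) < mR F b := by
  obtain ⟨g, hg1, hg2, hg3⟩ := dens_slice hF
  have hpos : ∀ r, a < r → 0 < mR F r := by
    intro r hr
    have hr' : a < min r b := lt_min hr hab
    have h1 : (a + min r b) / 2 < min r b := by linarith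
    have h2 := hlt ((a + min r b) / 2) ⟨by linarith, by linarith [min_le_right r b]⟩
    refine mR_pos_of (r' := (a + min r b) / 2) (by linarith [min_le_left r b]) ?_
    rw [Set.nonempty_iff_ne_empty]
    intro h
    rw [h, measure_empty] at h2
    exact not_lt_zero' h2
  set q : ℝ := 1 / ((k + 1 : ℕ) : ℝ) with hq
  have hn0 : (0 : ℝ) < ((k + 1 : ℕ) : ℝ) := by positivity
  have hq0 : 0 < q := by positivity
  set φ : ℝ → ℝ := fun r => mR F r ^ q with hφ
  have hm0 : ∀ r, 0 ≤ mR F r := fun r => ENNReal.toReal_nonneg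
  have hφm : Monotone φ := fun x y h => Real.rpow_le_rpow (hm0 x) (mR_mono F h) hq0.le
  have hder : ∀ᵐ r, r ∈ Set.Ioo a b → w ^ q / 2 < deriv φ r := by
    filter_upwards [slice_deriv hg1 hg3, (mR_mono F).ae_differentiableAt] with r h1 h2 hr
    have hmr := hpos r hr.1
    have hiso := iso4 hF hN hw hwv hmr h2.hasDerivAt
    rw [Measure.restrict_apply measurableSet_ball, Set.inter_comm] at hiso
    have hp := ENNReal.toReal_lt_of_lt_ofReal
      ((hlt r hr).trans_le ((hg2 r (ha.trans_lt hr.1)).trans h1))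
    set d := deriv (mR F) r
    have hd := (h2.hasDerivAt.rpow_const (p := q) (Or.inl hmr.ne')).deriv
    have hd' : deriv φ r = d * q * mR F r ^ (q - 1) := hd
    rw [hd']
    have hK : isoK k w (mR F r) < 2 * d := by linarith
    unfold isoK at hK
    rw [← hq, Nat.add_sub_cancel] at hK
    have e1 : (mR F r ^ q) ^ k * mR F r ^ (q - 1) = 1 := by
      rw [← Real.rpow_natCast, ← Real.rpow_mul hmr.le, ← Real.rpow_add hmr]
      have : q * (k : ℝ) + (q - 1) = 0 := by
        rw [hq]
        push_cast
        field_simp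
        ring
      rw [this, Real.rpow_zero]
    have e2 : 0 < q * mR F r ^ (q - 1) := mul_pos hq0 (Real.rpow_pos_of_pos hmr _)
    have e3 := mul_lt_mul_of_pos_right hK e2
    have e4 : ((k + 1 : ℕ) : ℝ) * q = 1 := by rw [hq]; field_simp
    have e5 : ((k + 1 : ℕ) : ℝ) * w ^ q * (mR F r ^ q) ^ k * (q * mR F r ^ (q - 1)) = w ^ q := by
      calc _ = (((k + 1 : ℕ) : ℝ) * q) * ((mR F r ^ q) ^ k * mR F r ^ (q - 1)) * w ^ q := by ring
        _ = _ := by rw [e1, e4]; ring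
    rw [e5] at e3
    linarith
  have hder' : ∀ᵐ r ∂(volume.restrict (Set.Ioc a b)), w ^ q / 2 < deriv φ r := by
    rw [← Measure.restrict_congr_set Ioo_ae_eq_Ioc, ae_restrict_iff' measurableSet_Ioo]
    exact hder
  have hI := (hφm.monotoneOn (Set.uIcc a b)).intervalIntegral_deriv_mem_uIcc
  rw [Set.uIcc_of_le (sub_nonneg.2 (hφm hab.le))] at hI
  have hstrict : ∫ _ in a..b, w ^ q / 2 < ∫ r in a..b, deriv φ r := by
    refine intervalIntegral.integral_lt_integral_of_ae_le_of_measure_setOf_lt_ne_zero hab.le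
      (by simp) (hφm.monotoneOn _).intervalIntegrable_deriv (hder'.mono fun r h => h.le) ?_
    intro h0
    have h1 : (volume.restrict (Set.Ioc a b)) {r | ¬ (w ^ q / 2 < deriv φ r)} = 0 := hder'
    have h2 : (volume.restrict (Set.Ioc a b)) Set.univ = 0 := by
      refine measure_mono_null (t := {r | w ^ q / 2 < deriv φ r} ∪ {r | ¬ (w ^ q / 2 < deriv φ r)})
        (fun r _ => em _) (measure_union_null h0 h1)
    rw [Measure.restrict_apply_univ, Real.volume_Ioc, ENNReal.ofReal_eq_zero] at h2
    linarith
  rw [intervalIntegral.integral_const, smul_eq_mul] at hstrict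
  have hφa : 0 ≤ φ a := Real.rpow_nonneg (hm0 a) _
  have hfin : w ^ q * ((b - a) / 2) < φ b := by linarith [hI.2]
  have hwq : 0 < w ^ q := Real.rpow_pos_of_pos hw _
  have hpow : (w ^ q * ((b - a) / 2)) ^ (k + 1) < (φ b) ^ (k + 1) :=
    pow_lt_pow_left₀ hfin (mul_nonneg hwq.le (by linarith)) (Nat.succ_ne_zero k)
  have e : ∀ v : ℝ, 0 ≤ v → (v ^ q) ^ (k + 1) = v := by
    intro v hv
    rw [hq, one_div]
    exact Real.rpow_inv_natCast_pow hv (Nat.succ_ne_zero k)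
  rw [mul_pow, e w hw.le] at hpow
  simp only [hφ] at hpow
  rwa [e _ (hm0 b)] at hpow

/-- If `F` has finite perimeter and `|F| ≤ |B| (ε/2)ⁿ`, then there is `r ∈ (r₀ - ε, r₀)`
with `H^{n-1}(∂*F ∩ B_r) ≥ H^{n-1}(F¹ ∩ ∂B_r)`. -/
theorem statement11 (n : ℕ) (hn : 1 ≤ n) (F : Set (EuclideanSpace ℝ (Fin n)))
    (hF : MeasurableSet F) (hper : perimeter F < ⊤)
    (r₀ ε : ℝ) (hr₀ : 0 < r₀) (hε : 0 < ε)
    (hvol : volume F ≤ volume (unitBall n) * ENNReal.ofReal ((ε / 2) ^ n)) :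
    ∃ r ∈ Set.Ioo (r₀ - ε) r₀,
      μH[(n : ℝ) - 1]
          (densityOnePoints F ∩ Metric.sphere (0 : EuclideanSpace ℝ (Fin n)) r)
        ≤ μH[(n : ℝ) - 1]
          (essBoundary F ∩ Metric.ball (0 : EuclideanSpace ℝ (Fin n)) r) := by
  rcases lt_or_ge (r₀ - ε) 0 with hneg | hnn
  · refine ⟨(r₀ - ε) / 2, ⟨by linarith, by linarith⟩, ?_⟩
    rw [sphere_eq_empty_of_neg (by linarith), Set.inter_empty, measure_empty]
    exact bot_le
  obtain ⟨k, rfl⟩ : ∃ k, n = k + 1 := ⟨n - 1, by omega⟩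
  by_contra hcon
  push Not at hcon
  have hexp : (((k + 1 : ℕ) : ℝ) - 1) = (k : ℝ) := by push_cast; ring
  unfold perimeter at hper
  rw [hexp] at hper hcon
  set c := Measure.addHaarScalarFactor (volume : Measure (EuclideanSpace ℝ (Fin k))) μH[k] with hc
  have hc0 : (c : ℝ≥0∞) ≠ 0 := by
    simpa using Measure.addHaarScalarFactor_volume_hausdorffMeasure_ne_zero k
  have hE : ∀ s : Set (EE (k + 1)), (μHE[k] : Measure _) s = (c : ℝ≥0∞) * μH[(k : ℝ)] s := by
    intro s
    rw [Measure.euclideanHausdorffMeasure_def, ENNReal.smul_def, Measure.smul_apply, smul_eq_mul]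
  have hN : (μHE[k] : Measure _) (essBoundary F) ≠ ⊤ := by
    rw [hE]
    exact ENNReal.mul_ne_top ENNReal.coe_ne_top hper.ne
  have hwt : volume (ball (0 : EE (k + 1)) 1) = ENNReal.ofReal
      (volume (ball (0 : EE (k + 1)) 1)).toReal :=
    (ENNReal.ofReal_toReal measure_ball_lt_top.ne).symm
  have hcore := core hF hN (vball_pos 0 one_pos) hwt hnn (b := r₀) (by linarith) (by
    intro r hr
    rw [hE, hE]
    exact (ENNReal.mul_lt_mul_iff_right hc0 ENNReal.coe_ne_top).2 (hcon r hr))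
  rw [_root_.sub_sub_cancel] at hcore
  unfold unitBall at hvol
  have h1 : volume (F ∩ ball 0 r₀) ≤ ENNReal.ofReal
      ((volume (ball (0 : EE (k + 1)) 1)).toReal * (ε / 2) ^ (k + 1)) := by
    rw [ENNReal.ofReal_mul ENNReal.toReal_nonneg, ← hwt]
    exact (measure_mono Set.inter_subset_left).trans hvol
  have h2 : mR F r₀ ≤ (volume (ball (0 : EE (k + 1)) 1)).toReal * (ε / 2) ^ (k + 1) :=
    ENNReal.toReal_le_of_le_ofReal (by positivity) h1
  exact absurd hcore (not_lt.2 h2)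
end
end

section
/- Let n ≥ 1 be an integer and α ∈ (1,n). There exists a constant C = C(n,α) > 0 such that for every measurable set E ⊆ ℝⁿ with |E| = |B|, the Riesz potential Φ_E^α(x) := ∫_E |x−y|^{α−n} dy is continuously differentiable on ℝⁿ and satisfies sup_{x∈ℝⁿ} (|Φ_E^α(x)| + |∇Φ_E^α(x)|) ≤ C. -/
open MeasureTheory Metric Filter ENNReal

noncomputable section

/-- The Riesz potential `Φ_E^α(x) = ∫_E |x - y|^(α-n) dy`. -/
def rieszPotential {n : ℕ} (α : ℝ) (E : Set (EuclideanSpace ℝ (Fin n)))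
    (x : EuclideanSpace ℝ (Fin n)) : ℝ :=
  ∫ y in E, ‖x - y‖ ^ (α - (n : ℝ))

lemma rz_scalar (a s : ℝ) (ha : a < 0) (hs : 0 < s) (hs1 : s ≤ 1) (r ε : ℝ) (hr : 0 < r)
    (hε : 0 < ε) :
    |(r ^ 2 + ε) ^ (a / 2) - r ^ a| ≤ (1 - a) * ε ^ s * r ^ (a - 2 * s) := by
  have ht : 0 < ε / r ^ 2 := by positivity
  set t := ε / r ^ 2 with htdef
  have h1 : r ^ 2 + ε = r ^ 2 * (1 + t) := by rw [htdef]; field_simp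
  have h2 : (r ^ 2) ^ (a / 2) = r ^ a := by
    rw [← Real.rpow_natCast, ← Real.rpow_mul hr.le]; congr 1; push_cast; ring
  have h3 : ε ^ s * r ^ (a - 2 * s) = r ^ a * t ^ s := by
    rw [htdef, Real.div_rpow hε.le (by positivity), ← Real.rpow_natCast, ← Real.rpow_mul hr.le,
      Real.rpow_sub hr]
    push_cast
    ring
  have h4 : (1 + t) ^ (a / 2) ≤ 1 :=
    Real.rpow_le_one_of_one_le_of_nonpos (by linarith) (by linarith)
  have h4' : 0 < (1 + t) ^ (a / 2) := by positivity
  have h5 : 1 + (a / 2) * t ≤ (1 + t) ^ (a / 2) := by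
    rw [Real.rpow_def_of_pos (by linarith)]
    have := Real.add_one_le_exp (Real.log (1 + t) * (a / 2))
    have h6 := Real.log_le_sub_one_of_pos (show 0 < 1 + t by linarith)
    nlinarith
  have hra : 0 < r ^ a := by positivity
  have h7 : 1 - (1 + t) ^ (a / 2) ≤ (1 - a) * t ^ s := by
    rcases le_total t 1 with h | h
    · have : t ≤ t ^ s := by
        simpa using Real.rpow_le_rpow_of_exponent_ge ht h hs1
      nlinarith
    · have : 1 ≤ t ^ s := Real.one_le_rpow h hs.le
      nlinarith
  rw [h1, Real.mul_rpow (by positivity) (by linarith), h2, mul_assoc, h3,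
    abs_of_nonpos (by nlinarith)]
  nlinarith

lemma rz_int (n : ℕ) (hn : 1 ≤ n) (γ : ℝ) (hγ : -(n : ℝ) < γ) (hγ0 : γ ≤ 0) :
    ∃ C : ℝ, 0 < C ∧ ∀ E : Set (EuclideanSpace ℝ (Fin n)), MeasurableSet E →
      volume E = volume (ball (0 : EuclideanSpace ℝ (Fin n)) 1) →
      ∀ x, Integrable (fun y => ‖x - y‖ ^ γ) (volume.restrict E) ∧
        ∫ y in E, ‖x - y‖ ^ γ ≤ C := by
  set f : EuclideanSpace ℝ (Fin n) → ℝ := fun z => ‖z‖ ^ γ with hf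
  have hfm : Measurable f := by fun_prop
  have hint : IntegrableOn f (ball 0 1) volume := by
    refine integrableOn_ball_of_norm_le_rpow (C := 1) (α := -γ) (by simpa using hn)
      (by simp; linarith) (Eventually.of_forall fun z => ?_) hfm.aestronglyMeasurable
    simp only [hf, neg_neg, one_mul]
    rw [Real.norm_of_nonneg (by positivity)]
  set g := (ball (0 : EuclideanSpace ℝ (Fin n)) 1).indicator f with hg
  have hgi : Integrable g := (integrable_indicator_iff measurableSet_ball).2 hint
  have hg0 : ∀ z, 0 ≤ g z := fun z => Set.indicator_nonneg (fun z _ => by positivity) z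
  have hle : ∀ z, f z ≤ g z + 1 := by
    intro z
    by_cases hz : z ∈ ball (0 : EuclideanSpace ℝ (Fin n)) 1
    · simp [hg, hz]
    · simp only [hg, hz, not_false_eq_true, Set.indicator_of_notMem, zero_add, hf]
      apply Real.rpow_le_one_of_one_le_of_nonpos _ hγ0
      simpa using hz
  refine ⟨(∫ z, g z) + volume.real (ball (0 : EuclideanSpace ℝ (Fin n)) 1), ?_, ?_⟩
  · have : 0 < volume.real (ball (0 : EuclideanSpace ℝ (Fin n)) 1) :=
      ENNReal.toReal_pos (measure_ball_pos _ _ one_pos).ne' measure_ball_lt_top.ne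
    have : 0 ≤ ∫ z, g z := integral_nonneg fun z => hg0 z
    linarith
  intro E hE hvol x
  have hfin : IsFiniteMeasure (volume.restrict E) := by
    refine ⟨?_⟩
    rw [Measure.restrict_apply_univ, hvol]
    exact measure_ball_lt_top
  have hgx : Integrable (fun y => g (x - y)) := hgi.comp_sub_left x
  have hb : Integrable (fun y => g (x - y) + 1) (volume.restrict E) :=
    hgx.restrict.add (integrable_const _)
  have hi : Integrable (fun y => ‖x - y‖ ^ γ) (volume.restrict E) := by
    refine hb.mono' (hfm.comp (measurable_const.sub measurable_id)).aestronglyMeasurable (Eventually.of_forall fun y => ?_)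
    rw [Real.norm_of_nonneg (by positivity)]
    exact hle (x - y)
  refine ⟨hi, ?_⟩
  calc ∫ y in E, ‖x - y‖ ^ γ ≤ ∫ y in E, (g (x - y) + 1) :=
        integral_mono hi hb (fun y => hle (x - y))
    _ = (∫ y in E, g (x - y)) + volume.real E := by
        rw [integral_add hgx.restrict (integrable_const _)]; simp
    _ ≤ (∫ y, g (x - y)) + volume.real E := by
        gcongr
        · exact Eventually.of_forall fun y => hg0 _
        · exact Measure.restrict_le_self
    _ = _ := by rw [integral_sub_left_eq_self g volume x, Measure.real, hvol, Measure.real]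

lemma rz_deriv {n : ℕ} (p ε : ℝ) (hε : 0 < ε) (x y : EuclideanSpace ℝ (Fin n)) :
    HasFDerivAt (fun x => (‖x - y‖ ^ 2 + ε) ^ (p / 2))
      ((p * (‖x - y‖ ^ 2 + ε) ^ ((p - 2) / 2)) • innerSL ℝ (x - y)) x := by
  have h1 : HasFDerivAt (fun x => ‖x - y‖ ^ 2 + ε) (2 • (innerSL ℝ (x - y))) x := by
    have := ((hasFDerivAt_id (𝕜 := ℝ) x).sub_const y).norm_sq.add_const ε
    simpa using this
  have h2 := h1.rpow_const (p := p / 2) (Or.inl (by positivity))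
  have h3 : (p * (‖x - y‖ ^ 2 + ε) ^ ((p - 2) / 2)) • innerSL ℝ (x - y) =
      (p / 2 * (‖x - y‖ ^ 2 + ε) ^ (p / 2 - 1)) • 2 • innerSL ℝ (x - y) := by
    rw [show (p - 2) / 2 = p / 2 - 1 by ring]
    module
  rw [h3]
  exact h2

lemma rz_bound {n : ℕ} (p ε : ℝ) (hp : p < 0) (hε : 0 < ε) (z : EuclideanSpace ℝ (Fin n)) :
    ‖(p * (‖z‖ ^ 2 + ε) ^ ((p - 2) / 2)) • innerSL ℝ z‖ ≤ |p| * ε ^ ((p - 1) / 2) := by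
  have hpos : 0 < ‖z‖ ^ 2 + ε := by positivity
  rw [norm_smul, innerSL_apply_norm, norm_mul, Real.norm_eq_abs, mul_assoc]
  gcongr
  rw [Real.norm_of_nonneg (by positivity)]
  calc (‖z‖ ^ 2 + ε) ^ ((p - 2) / 2) * ‖z‖
      ≤ (‖z‖ ^ 2 + ε) ^ ((p - 2) / 2) * (‖z‖ ^ 2 + ε) ^ (1 / 2 : ℝ) := by
        gcongr
        rw [← Real.sqrt_eq_rpow]
        exact Real.le_sqrt_of_sq_le (by linarith)
    _ = (‖z‖ ^ 2 + ε) ^ ((p - 1) / 2) := by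
        rw [← Real.rpow_add hpos]; congr 1; ring
    _ ≤ ε ^ ((p - 1) / 2) :=
        Real.rpow_le_rpow_of_nonpos hε (by nlinarith [sq_nonneg ‖z‖]) (by linarith)

lemma rz_diff {n : ℕ} (p s ε : ℝ) (hp : p < 0) (hs : 0 < s) (hs1 : s ≤ 1) (hε : 0 < ε)
    (z : EuclideanSpace ℝ (Fin n)) :
    ‖(p * (‖z‖ ^ 2 + ε) ^ ((p - 2) / 2)) • innerSL ℝ z - (p * ‖z‖ ^ (p - 2)) • innerSL ℝ z‖
      ≤ (|p| * (3 - p) * ε ^ s) * ‖z‖ ^ (p - 1 - 2 * s) := by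
  rcases eq_or_ne z 0 with rfl | hz
  · have : 0 ≤ 3 - p := by linarith
    simp
    positivity
  have hz : 0 < ‖z‖ := norm_pos_iff.2 hz
  rw [← sub_smul, ← mul_sub, norm_smul, innerSL_apply_norm, norm_mul, Real.norm_eq_abs,
    Real.norm_eq_abs]
  have h := rz_scalar (p - 2) s (by linarith) hs hs1 ‖z‖ ε hz hε
  have e : ‖z‖ ^ (p - 1 - 2 * s) = ‖z‖ ^ (p - 2 - 2 * s) * ‖z‖ := by
    rw [← Real.rpow_add_one hz.ne']; congr 1; ring
  calc _ ≤ |p| * ((1 - (p - 2)) * ε ^ s * ‖z‖ ^ (p - 2 - 2 * s)) * ‖z‖ := by gcongr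
    _ = _ := by rw [e]; ring

lemma rz_norm {n : ℕ} (p : ℝ) (z : EuclideanSpace ℝ (Fin n)) :
    ‖(p * ‖z‖ ^ (p - 2)) • innerSL ℝ z‖ ≤ |p| * ‖z‖ ^ (p - 1) := by
  rcases eq_or_ne z 0 with rfl | hz
  · simp
    positivity
  have hz : 0 < ‖z‖ := norm_pos_iff.2 hz
  rw [norm_smul, innerSL_apply_norm, norm_mul, Real.norm_eq_abs,
    Real.norm_of_nonneg (by positivity), mul_assoc, ← Real.rpow_add_one hz.ne']
  apply le_of_eq; congr 2; ring

lemma rz_main (n : ℕ) (hn : 1 ≤ n) (α : ℝ) (hα1 : 1 < α) (hαn : α < n) :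
    ∃ C : ℝ, 0 < C ∧ ∀ E : Set (EuclideanSpace ℝ (Fin n)), MeasurableSet E →
      volume E = volume (ball (0 : EuclideanSpace ℝ (Fin n)) 1) →
        ContDiff ℝ 1 (fun x => ∫ y in E, ‖x - y‖ ^ (α - (n : ℝ))) ∧
        ∀ x : EuclideanSpace ℝ (Fin n),
          |∫ y in E, ‖x - y‖ ^ (α - (n : ℝ))| +
            ‖fderiv ℝ (fun x => ∫ y in E, ‖x - y‖ ^ (α - (n : ℝ))) x‖ ≤ C := by
  obtain ⟨p, hp⟩ : ∃ p, p = α - (n : ℝ) := ⟨_, rfl⟩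
  rw [← hp]
  have hp0 : p < 0 := by linarith
  have hpn : -(n : ℝ) < p - 1 := by linarith
  obtain ⟨s, hs, hs1, hsn⟩ : ∃ s : ℝ, 0 < s ∧ s ≤ 1 ∧ -(n : ℝ) < p - 1 - 2 * s :=
    ⟨min 1 ((p - 1 + n) / 4), lt_min one_pos (by linarith), min_le_left _ _, by
      have := min_le_right 1 ((p - 1 + n) / 4); linarith⟩
  obtain ⟨C0, hC0, H0⟩ := rz_int n hn p (by linarith) hp0.le
  obtain ⟨C1, hC1, H1⟩ := rz_int n hn (p - 1) hpn (by linarith)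
  obtain ⟨C2, hC2, H2⟩ := rz_int n hn (p - 2 * s) (by linarith) (by linarith)
  obtain ⟨C3, hC3, H3⟩ := rz_int n hn (p - 1 - 2 * s) hsn (by linarith)
  refine ⟨C0 + |p| * C1, by positivity, fun E hE hvol => ?_⟩
  have hnt : Nontrivial (EuclideanSpace ℝ (Fin n)) := by
    apply Module.nontrivial_of_finrank_pos (R := ℝ)
    rw [finrank_euclideanSpace_fin]
    exact hn
  have hfin : IsFiniteMeasure (volume.restrict E) := by
    refine ⟨?_⟩
    rw [Measure.restrict_apply_univ, hvol]
    exact measure_ball_lt_top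
  have hinn : Continuous (fun z : EuclideanSpace ℝ (Fin n) => innerSL ℝ z) :=
    (innerSL ℝ (E := EuclideanSpace ℝ (Fin n))).continuous
  let e : ℕ → ℝ := fun m => 1 / ((m : ℝ) + 1)
  have he : ∀ m, 0 < e m := fun m => by positivity
  have het : Tendsto (fun m => e m ^ s) atTop (nhds 0) := by
    have := (tendsto_one_div_add_atTop_nhds_zero_nat (𝕜 := ℝ)).rpow_const (p := s) (Or.inr hs.le)
    rwa [Real.zero_rpow hs.ne'] at this
  let k : ℕ → EuclideanSpace ℝ (Fin n) → ℝ := fun m z => (‖z‖ ^ 2 + e m) ^ (p / 2)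
  let K : ℕ → EuclideanSpace ℝ (Fin n) → (EuclideanSpace ℝ (Fin n) →L[ℝ] ℝ) := fun m z =>
    (p * (‖z‖ ^ 2 + e m) ^ ((p - 2) / 2)) • innerSL ℝ z
  let K0 : EuclideanSpace ℝ (Fin n) → (EuclideanSpace ℝ (Fin n) →L[ℝ] ℝ) := fun z =>
    (p * ‖z‖ ^ (p - 2)) • innerSL ℝ z
  have hkc : ∀ m, Continuous (k m) := fun m => by
    refine Continuous.rpow_const (by fun_prop) fun z => Or.inl ?_
    have := he m
    positivity
  have hKc : ∀ m, Continuous (K m) := fun m => by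
    refine (continuous_const.mul (Continuous.rpow_const (by fun_prop) fun z => Or.inl ?_)).smul hinn
    have := he m
    positivity
  have hKb : ∀ m z, ‖K m z‖ ≤ |p| * (e m) ^ ((p - 1) / 2) := fun m z =>
    rz_bound p (e m) hp0 (he m) z
  have hsub : ∀ x : EuclideanSpace ℝ (Fin n), Continuous (fun y => x - y) := fun x => by fun_prop
  have hki : ∀ m x, Integrable (fun y => k m (x - y)) (volume.restrict E) := fun m x => by
    refine (integrable_const ((e m) ^ (p / 2))).mono'
      ((hkc m).comp (hsub x)).aestronglyMeasurable (Eventually.of_forall fun y => ?_)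
    have := he m
    have hpos : 0 < ‖x - y‖ ^ 2 + e m := by positivity
    simp only [k]
    rw [Real.norm_of_nonneg (by positivity)]
    exact Real.rpow_le_rpow_of_nonpos this (by nlinarith [sq_nonneg ‖x - y‖]) (by linarith)
  have hKi : ∀ m x, Integrable (fun y => K m (x - y)) (volume.restrict E) := fun m x =>
    (integrable_const (|p| * (e m) ^ ((p - 1) / 2))).mono'
      ((hKc m).comp (hsub x)).aestronglyMeasurable (Eventually.of_forall fun y => hKb m _)
  have hK0m : Measurable K0 := by
    have h1 : Measurable (fun z : EuclideanSpace ℝ (Fin n) => p * ‖z‖ ^ (p - 2)) := by fun_prop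
    exact h1.smul hinn.measurable
  have hK0i : ∀ x, Integrable (fun y => K0 (x - y)) (volume.restrict E) := fun x =>
    ((H1 E hE hvol x).1.const_mul |p|).mono'
      (hK0m.comp (hsub x).measurable).aestronglyMeasurable
      (Eventually.of_forall fun y => rz_norm p (x - y))
  have hder : ∀ m x, HasFDerivAt (fun x => ∫ y in E, k m (x - y)) (∫ y in E, K m (x - y)) x := by
    intro m x
    refine hasFDerivAt_integral_of_dominated_of_fderiv_le (s := Set.univ)
      (F := fun x y => k m (x - y)) (F' := fun x y => K m (x - y))
      (bound := fun _ => |p| * (e m) ^ ((p - 1) / 2)) univ_mem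
      (Eventually.of_forall fun x => (hki m x).aestronglyMeasurable) (hki m x)
      (hKi m x).aestronglyMeasurable (Eventually.of_forall fun y x _ => hKb m _)
      (integrable_const _) (Eventually.of_forall fun y x _ => rz_deriv p (e m) (he m) x y)
  have hcont : ∀ m, Continuous (fun x => ∫ y in E, K m (x - y)) := by
    intro m
    refine continuous_of_dominated (bound := fun _ => |p| * (e m) ^ ((p - 1) / 2))
      (fun x => (hKi m x).aestronglyMeasurable)
      (fun x => Eventually.of_forall fun y => hKb m _) (integrable_const _)
      (Eventually.of_forall fun y => ?_)
    exact (hKc m).comp (by fun_prop)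
  have hunif : TendstoUniformly (fun m x => ∫ y in E, K m (x - y))
      (fun x => ∫ y in E, K0 (x - y)) atTop := by
    rw [Metric.tendstoUniformly_iff]
    intro δ hδ
    have hlim : Tendsto (fun m => |p| * (3 - p) * e m ^ s * C3) atTop (nhds 0) := by
      have := (het.const_mul (|p| * (3 - p))).mul_const C3
      simpa using this
    filter_upwards [hlim.eventually (gt_mem_nhds hδ)] with m hm x
    refine lt_of_le_of_lt ?_ hm
    have hc : 0 ≤ |p| * (3 - p) * e m ^ s := by
      have : 0 < 3 - p := by linarith
      have := he m
      positivity
    rw [dist_comm, dist_eq_norm, ← integral_sub (hKi m x) (hK0i x)]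
    calc ‖∫ y in E, (K m (x - y) - K0 (x - y))‖
        ≤ ∫ y in E, |p| * (3 - p) * e m ^ s * ‖x - y‖ ^ (p - 1 - 2 * s) :=
          norm_integral_le_of_norm_le ((H3 E hE hvol x).1.const_mul _)
            (Eventually.of_forall fun y => rz_diff p s (e m) hp0 hs hs1 (he m) (x - y))
      _ = |p| * (3 - p) * e m ^ s * ∫ y in E, ‖x - y‖ ^ (p - 1 - 2 * s) := integral_const_mul _ _
      _ ≤ _ := mul_le_mul_of_nonneg_left (H3 E hE hvol x).2 hc
  have hpt : ∀ x, Tendsto (fun m => ∫ y in E, k m (x - y)) atTop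
      (nhds (∫ y in E, ‖x - y‖ ^ p)) := by
    intro x
    rw [tendsto_iff_norm_sub_tendsto_zero]
    have hlim : Tendsto (fun m => (1 - p) * e m ^ s * C2) atTop (nhds 0) := by
      have := (het.const_mul (1 - p)).mul_const C2
      simpa using this
    refine squeeze_zero (fun _ => norm_nonneg _) (fun m => ?_) hlim
    have hc : 0 ≤ (1 - p) * e m ^ s := by
      have : 0 < 1 - p := by linarith
      have := he m
      positivity
    rw [← integral_sub (hki m x) (H0 E hE hvol x).1]
    have hne : ∀ᵐ y ∂(volume.restrict E), y ≠ x :=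
      ae_restrict_of_ae (compl_mem_ae_iff.2 (measure_singleton x))
    calc ‖∫ y in E, (k m (x - y) - ‖x - y‖ ^ p)‖
        ≤ ∫ y in E, (1 - p) * e m ^ s * ‖x - y‖ ^ (p - 2 * s) := by
          refine norm_integral_le_of_norm_le ((H2 E hE hvol x).1.const_mul _) ?_
          filter_upwards [hne] with y hy
          exact rz_scalar p s hp0 hs hs1 _ _ (norm_pos_iff.2 (sub_ne_zero.2 hy.symm)) (he m)
      _ = (1 - p) * e m ^ s * ∫ y in E, ‖x - y‖ ^ (p - 2 * s) := integral_const_mul _ _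
      _ ≤ _ := mul_le_mul_of_nonneg_left (H2 E hE hvol x).2 hc
  have hfd : ∀ x, HasFDerivAt (fun x => ∫ y in E, ‖x - y‖ ^ p) (∫ y in E, K0 (x - y)) x :=
    fun x => hasFDerivAt_of_tendstoUniformly hunif hder hpt x
  refine ⟨contDiff_one_iff_hasFDerivAt.2 ⟨_, hunif.continuous
    (Frequently.of_forall hcont), hfd⟩, fun x => ?_⟩
  rw [(hfd x).fderiv]
  gcongr
  · rw [abs_of_nonneg (integral_nonneg fun y => by positivity)]
    exact (H0 E hE hvol x).2
  · calc ‖∫ y in E, K0 (x - y)‖ ≤ ∫ y in E, |p| * ‖x - y‖ ^ (p - 1) :=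
          norm_integral_le_of_norm_le ((H1 E hE hvol x).1.const_mul _)
            (Eventually.of_forall fun y => rz_norm p (x - y))
      _ = |p| * ∫ y in E, ‖x - y‖ ^ (p - 1) := integral_const_mul _ _
      _ ≤ _ := mul_le_mul_of_nonneg_left (H1 E hE hvol x).2 (abs_nonneg p)

/-- For `α ∈ (1, n)` there is `C = C(n, α)` such that for every set `E` of volume `|B|`,
the Riesz potential `Φ_E^α` is `C¹` with `|Φ_E^α| + |∇Φ_E^α| ≤ C` everywhere. -/
theorem statement12 (n : ℕ) (hn : 1 ≤ n) (α : ℝ) (hα1 : 1 < α) (hαn : α < n) :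
    ∃ C : ℝ, 0 < C ∧ ∀ E : Set (EuclideanSpace ℝ (Fin n)), MeasurableSet E →
      volume E = volume (unitBall n) →
        ContDiff ℝ 1 (rieszPotential α E) ∧
        ∀ x : EuclideanSpace ℝ (Fin n),
          |rieszPotential α E x| + ‖fderiv ℝ (rieszPotential α E) x‖ ≤ C := by
  exact rz_main n hn α hα1 hαn
end
end
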